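/- Let K be a tetrahedron in ℝ³ and k ∈ {1,2}. A function v ∈ W_k(K) := ∇P_{k+1}(K) ⊕ x × P₁(K;ℝ³) ⊕ b_K·P₁(K;ℝ³) is uniquely determined by the following 10k + 22 degrees of freedom: the edge moments ∫_e (v·t) q ds for all q ∈ P_k(e) and every edge e of K; the face moments ∫_F (v × n)·q dS for all q ∈ RM_{k−2}(F) and every face F of K; and the face moments ∫_F (curl v × n)·q dS for all q ∈ RT(F) and every face F of K. That is, if all these functionals vanish on v then v = 0. -/

import Mathlib

open MeasureTheory
open scoped Classical

noncomputable section

/-! ### Basic vector calculus on ℝ³ -/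

abbrev Vec : Type := Fin 3 → ℝ
abbrev Mat : Type := Fin 3 → Fin 3 → ℝ

/-- Euclidean dot product on ℝ³. -/
def dot3 (v w : Vec) : ℝ := ∑ i, v i * w i
/-- squared Euclidean norm. -/
def nsq3 (v : Vec) : ℝ := dot3 v v
/-- Euclidean norm. -/
def enorm3 (v : Vec) : ℝ := Real.sqrt (dot3 v v)
/-- normalization to a unit vector. -/
def normalize3 (v : Vec) : Vec := (enorm3 v)⁻¹ • v
/-- cross product on ℝ³. -/
def cross3 (v w : Vec) : Vec :=
  ![v 1 * w 2 - v 2 * w 1, v 2 * w 0 - v 0 * w 2, v 0 * w 1 - v 1 * w 0]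
/-- Frobenius inner product of 3×3 matrices. -/
def dotM (A B : Mat) : ℝ := ∑ i, ∑ j, A i j * B i j
/-- squared Frobenius norm. -/
def nsqM (A : Mat) : ℝ := dotM A A

/-- partial derivative ∂ᵢ of a scalar field. -/
def pd (i : Fin 3) (f : Vec → ℝ) (x : Vec) : ℝ := fderiv ℝ f x (Pi.single i 1)
/-- gradient of a scalar field. -/
def grad3 (f : Vec → ℝ) (x : Vec) : Vec := fun i => pd i f x
/-- curl of a vector field. -/
def curl3 (v : Vec → Vec) (x : Vec) : Vec :=
  ![pd 1 (fun y => v y 2) x - pd 2 (fun y => v y 1) x,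
    pd 2 (fun y => v y 0) x - pd 0 (fun y => v y 2) x,
    pd 0 (fun y => v y 1) x - pd 1 (fun y => v y 0) x]
/-- divergence of a vector field. -/
def div3 (v : Vec → Vec) (x : Vec) : ℝ := ∑ i, pd i (fun y => v y i) x
/-- Jacobian matrix of a vector field. -/
def jac3 (v : Vec → Vec) (x : Vec) : Mat := fun i j => pd j (fun y => v y i) x
/-- application of a matrix to a vector (e.g. normal derivative ∂ₙ). -/
def japply (J : Mat) (n : Vec) : Vec := fun i => ∑ j, J i j * n j

/-- iterated partial derivatives along a list of directions. -/
def pdIter : List (Fin 3) → (Vec → ℝ) → Vec → ℝ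
  | [], f => f
  | i :: l, f => pd i (pdIter l f)

/-- `f` is (the function of) a polynomial of total degree at most `k`. -/
def PolyDeg (k : ℕ) (f : Vec → ℝ) : Prop :=
  ∃ p : MvPolynomial (Fin 3) ℝ, p.totalDegree ≤ k ∧ ∀ x, f x = MvPolynomial.eval x p
/-- vector-valued polynomial of total degree at most `k`. -/
def VPolyDeg (k : ℕ) (v : Vec → Vec) : Prop := ∀ i, PolyDeg k fun x => v x i

/-! ### Tetrahedra -/

/-- A (nondegenerate) tetrahedron in ℝ³, given by its four vertices. -/
structure Tetra where
  vtx : Fin 4 → Vec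
  indep : AffineIndependent ℝ vtx

namespace Tetra

/-- the tetrahedron as a closed subset of ℝ³. -/
def K (T : Tetra) : Set Vec := convexHull ℝ (Set.range T.vtx)
/-- the edge joining vertices `i`, `j`. -/
def edge (T : Tetra) (i j : Fin 4) : Set Vec := segment ℝ (T.vtx i) (T.vtx j)
/-- a unit tangent vector of the edge joining vertices `i`, `j`. -/
def tangent (T : Tetra) (i j : Fin 4) : Vec := normalize3 (T.vtx j - T.vtx i)
/-- the face opposite to vertex `i`. -/
def face (T : Tetra) (i : Fin 4) : Set Vec := convexHull ℝ (T.vtx '' {j | j ≠ i})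
/-- unit outward normal of the face opposite to vertex `i`. -/
def outNormal (T : Tetra) (i : Fin 4) : Vec :=
  let a := T.vtx (i.succAbove 0)
  let u := cross3 (T.vtx (i.succAbove 1) - a) (T.vtx (i.succAbove 2) - a)
  (if 0 < dot3 u (T.vtx i - a) then (-1 : ℝ) else 1) • normalize3 u

/-- `lam` is the family of barycentric coordinates of `T`. -/
def IsBary (T : Tetra) (lam : Fin 4 → Vec → ℝ) : Prop :=
  (∀ i, PolyDeg 1 (lam i)) ∧ ∀ i j, lam i (T.vtx j) = if i = j then (1 : ℝ) else 0
/-- `b` is the (quartic) bubble function of `T`. -/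
def IsBubble (T : Tetra) (b : Vec → ℝ) : Prop :=
  ∃ lam, T.IsBary lam ∧ ∀ x, b x = ∏ i, lam i x

end Tetra

/-! ### Local shape function spaces -/

/-- the local space `W_k(K) = ∇P_{k+1}(K) ⊕ x × P₁(K;ℝ³) ⊕ b_K P₁(K;ℝ³)`. -/
def MemW (k : ℕ) (T : Tetra) (v : Vec → Vec) : Prop :=
  ∃ (q : Vec → ℝ) (p r : Vec → Vec) (b : Vec → ℝ), T.IsBubble b ∧
    PolyDeg (k + 1) q ∧ VPolyDeg 1 p ∧ VPolyDeg 1 r ∧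
    ∀ x, v x = grad3 q x + cross3 x (p x) + b x • r x

/-- the local Tai–Winther space `V^d(K) = P₁(K;ℝ³) ⊕ curl(b_K P₁(K;ℝ³))`. -/
def MemVd (T : Tetra) (v : Vec → Vec) : Prop :=
  ∃ (p r : Vec → Vec) (b : Vec → ℝ), T.IsBubble b ∧ VPolyDeg 1 p ∧ VPolyDeg 1 r ∧
    ∀ x, v x = p x + curl3 (fun y => b y • r y) x

/-- the local Nédélec space `V_k^{ND}(K) = ∇P_{k+1}(K) ⊕ x × P₁(K;ℝ³)`, `k = 1,2`. -/
def MemND (k : ℕ) (v : Vec → Vec) : Prop :=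
  ∃ (q : Vec → ℝ) (p : Vec → Vec), PolyDeg (k + 1) q ∧ VPolyDeg 1 p ∧
    ∀ x, v x = grad3 q x + cross3 x (p x)

/-- the face test space `RM_{k-2}(F) = P₀(F;ℝ²) ⊕ x^⊥ P_{k-2}(F)` on the face with
unit normal `n`; for `k = 1` this is just `P₀(F;ℝ²)`. -/
def MemRM (k : ℕ) (n : Vec) (q : Vec → Vec) : Prop :=
  ∃ (a : Vec) (c : ℝ), dot3 a n = 0 ∧ (k ≤ 1 → c = 0) ∧ ∀ x, q x = a + c • cross3 n x

/-- the face test space `RT(F) = P₀(F;ℝ²) ⊕ x P₀(F)` on the face with unit normal `n`. -/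
def MemRT (n : Vec) (q : Vec → Vec) : Prop :=
  ∃ (a : Vec) (c : ℝ), dot3 a n = 0 ∧ ∀ x, q x = a + c • (x - dot3 x n • n)

/-! ### Degrees of freedom -/

/-- edge moment `∫_e (v⋅t) q ds`. -/
def edgeMoment (T : Tetra) (a b : Fin 4) (v : Vec → Vec) (q : Vec → ℝ) : ℝ :=
  ∫ x in T.edge a b, dot3 (v x) (T.tangent a b) * q x ∂μH[1]
/-- tangential face moment `∫_F (v × n)⋅q dS`. -/
def faceTanMoment (T : Tetra) (a : Fin 4) (v : Vec → Vec) (q : Vec → Vec) : ℝ :=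
  ∫ x in T.face a, dot3 (cross3 (v x) (T.outNormal a)) (q x) ∂μH[2]
/-- normal face moment `∫_F (v⋅n) q dS`. -/
def faceNorMoment (T : Tetra) (a : Fin 4) (v : Vec → Vec) (q : Vec → ℝ) : ℝ :=
  ∫ x in T.face a, dot3 (v x) (T.outNormal a) * q x ∂μH[2]
/-- surface integral over a face. -/
def faceInt2 (T : Tetra) (a : Fin 4) (g : Vec → ℝ) : ℝ := ∫ x in T.face a, g x ∂μH[2]
/-- diameter of a face. -/
def hF (T : Tetra) (a : Fin 4) : ℝ := Metric.diam (T.face a)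

/-! ### Meshes -/

/-- A face-to-face tetrahedral mesh. -/
structure Mesh where
  n : ℕ
  npos : 0 < n
  el : Fin n → Tetra
  disj : ∀ i j, i ≠ j → interior (el i).K ∩ interior (el j).K = ∅
  conform : ∀ i j, i ≠ j → ∃ s e : Set (Fin 4),
    (el i).vtx '' s = (el j).vtx '' e ∧ (el i).K ∩ (el j).K = convexHull ℝ ((el i).vtx '' s)

namespace Mesh
/-- the open domain triangulated by the mesh. -/
def domain (M : Mesh) : Set Vec := interior (⋃ i, (M.el i).K)
/-- the mesh triangulates the (connected, polyhedral) domain `Ω`. -/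
def Covers (M : Mesh) (Ω : Set Vec) : Prop :=
  Ω = M.domain ∧ closure Ω = (⋃ i, (M.el i).K) ∧ IsConnected Ω
/-- the mesh size `h`. -/
def hsize (M : Mesh) : ℝ := ⨆ i, Metric.diam (M.el i).K
/-- shape regularity with constant `ρ`. -/
def ShapeReg (ρ : ℝ) (M : Mesh) : Prop :=
  ∀ i, ∃ x, Metric.ball x (ρ * Metric.diam (M.el i).K) ⊆ (M.el i).K
end Mesh

/-- A bounded polyhedral domain: a connected open set triangulated by some tetrahedral mesh. -/
def PolyhedralDomain (Ω : Set Vec) : Prop := ∃ M : Mesh, M.Covers Ω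

/-- piecewise vector fields on a mesh (one smooth representative per element). -/
abbrev DiscVF (M : Mesh) := Fin M.n → Vec → Vec
/-- piecewise scalar fields on a mesh. -/
abbrev DiscSF (M : Mesh) := Fin M.n → Vec → ℝ

/-- elementwise average (the `L²`-projection onto piecewise constants). -/
def avg (M : Mesh) (g : Vec → ℝ) (i : Fin M.n) : ℝ :=
  (∫ x in (M.el i).K, g x) / (volume (M.el i).K).toReal

/-! ### Global finite element spaces -/

/-- the `H(grad curl)`-nonconforming space `W_h`: piecewise `W_k(K)`, all DoFs
single-valued, and the edge DoFs and `RM`-face DoFs vanishing on `∂Ω`. -/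
def MemWh (k : ℕ) (M : Mesh) (Ω : Set Vec) (u : DiscVF M) : Prop :=
  (∀ i, MemW k (M.el i) (u i)) ∧
  (∀ i j a b c d, i ≠ j → (M.el i).edge a b = (M.el j).edge c d →
     ∀ q, PolyDeg k q → edgeMoment (M.el i) a b (u i) q = edgeMoment (M.el i) a b (u j) q) ∧
  (∀ i j a b, i ≠ j → (M.el i).face a = (M.el j).face b →
     ∀ q, MemRM k ((M.el i).outNormal a) q →
       faceTanMoment (M.el i) a (u i) q = faceTanMoment (M.el i) a (u j) q) ∧
  (∀ i j a b, i ≠ j → (M.el i).face a = (M.el j).face b →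
     ∀ q, MemRT ((M.el i).outNormal a) q →
       faceTanMoment (M.el i) a (curl3 (u i)) q = faceTanMoment (M.el i) a (curl3 (u j)) q) ∧
  (∀ i a b, (M.el i).edge a b ⊆ frontier Ω →
     ∀ q, PolyDeg k q → edgeMoment (M.el i) a b (u i) q = 0) ∧
  (∀ i a, (M.el i).face a ⊆ frontier Ω →
     ∀ q, MemRM k ((M.el i).outNormal a) q → faceTanMoment (M.el i) a (u i) q = 0)

/-- the space `W_{h0}`: all DoFs, including the curl-trace face DoFs, vanish on `∂Ω`. -/
def MemWh0 (k : ℕ) (M : Mesh) (Ω : Set Vec) (u : DiscVF M) : Prop :=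
  MemWh k M Ω u ∧
  ∀ i a, (M.el i).face a ⊆ frontier Ω →
    ∀ q, MemRT ((M.el i).outNormal a) q → faceTanMoment (M.el i) a (curl3 (u i)) q = 0

/-- the degree-`(k+1)` Lagrange space with zero boundary trace. -/
def MemVhg (k : ℕ) (M : Mesh) (Ω : Set Vec) (u : DiscSF M) : Prop :=
  (∀ i, PolyDeg (k + 1) (u i)) ∧
  (∀ i j, ∀ x ∈ (M.el i).K ∩ (M.el j).K, u i x = u j x) ∧
  (∀ i, ∀ x ∈ (M.el i).K ∩ frontier Ω, u i x = 0)

/-- the Tai–Winther space `V_h^d`: normal components continuous, tangential `RT`-moments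
single-valued, normal DoFs vanishing on `∂Ω`. -/
def MemVhd (M : Mesh) (Ω : Set Vec) (u : DiscVF M) : Prop :=
  (∀ i, MemVd (M.el i) (u i)) ∧
  (∀ i j a b, i ≠ j → (M.el i).face a = (M.el j).face b →
     (∀ q, PolyDeg 1 q → faceNorMoment (M.el i) a (u i) q = faceNorMoment (M.el i) a (u j) q) ∧
     (∀ q, MemRT ((M.el i).outNormal a) q →
       faceTanMoment (M.el i) a (u i) q = faceTanMoment (M.el i) a (u j) q)) ∧
  (∀ i a, (M.el i).face a ⊆ frontier Ω →
     ∀ q, PolyDeg 1 q → faceNorMoment (M.el i) a (u i) q = 0)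

/-- the Tai–Winther space `V_{h0}^d` with all DoFs vanishing on `∂Ω`. -/
def MemVh0d (M : Mesh) (Ω : Set Vec) (u : DiscVF M) : Prop :=
  MemVhd M Ω u ∧
  ∀ i a, (M.el i).face a ⊆ frontier Ω →
    ∀ q, MemRT ((M.el i).outNormal a) q → faceTanMoment (M.el i) a (u i) q = 0

/-- the piecewise-constant space `𝒬_h` with zero mean. -/
def MemQh (M : Mesh) (q : Fin M.n → ℝ) : Prop :=
  ∑ i, q i * (volume (M.el i).K).toReal = 0

/-- the Nédélec space with vanishing tangential boundary DoFs. -/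
def MemVND (k : ℕ) (M : Mesh) (Ω : Set Vec) (u : DiscVF M) : Prop :=
  (∀ i, MemND k (u i)) ∧
  (∀ i j a b c d, i ≠ j → (M.el i).edge a b = (M.el j).edge c d →
     ∀ q, PolyDeg k q → edgeMoment (M.el i) a b (u i) q = edgeMoment (M.el i) a b (u j) q) ∧
  (∀ i j a b, i ≠ j → (M.el i).face a = (M.el j).face b →
     ∀ q, MemRM k ((M.el i).outNormal a) q →
       faceTanMoment (M.el i) a (u i) q = faceTanMoment (M.el i) a (u j) q) ∧
  (∀ i a b, (M.el i).edge a b ⊆ frontier Ω →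
     ∀ q, PolyDeg k q → edgeMoment (M.el i) a b (u i) q = 0) ∧
  (∀ i a, (M.el i).face a ⊆ frontier Ω →
     ∀ q, MemRM k ((M.el i).outNormal a) q → faceTanMoment (M.el i) a (u i) q = 0)

/-- the lowest-order BDM space with vanishing normal boundary trace. -/
def MemVBDM (M : Mesh) (Ω : Set Vec) (u : DiscVF M) : Prop :=
  (∀ i, VPolyDeg 1 (u i)) ∧
  (∀ i j a b, i ≠ j → (M.el i).face a = (M.el j).face b →
     ∀ x ∈ (M.el i).face a, dot3 (u i x) ((M.el i).outNormal a) = dot3 (u j x) ((M.el i).outNormal a)) ∧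
  (∀ i a, (M.el i).face a ⊆ frontier Ω →
     ∀ x ∈ (M.el i).face a, dot3 (u i x) ((M.el i).outNormal a) = 0)

/-! ### Discrete norms and bilinear forms -/

/-- broken `L²` norm of a piecewise vector field. -/
def L2d (M : Mesh) (w : DiscVF M) : ℝ :=
  Real.sqrt (∑ i, ∫ x in (M.el i).K, nsq3 (w i x))
/-- `L²` norm of the (elementwise) curl. -/
def L2curl (M : Mesh) (w : DiscVF M) : ℝ :=
  Real.sqrt (∑ i, ∫ x in (M.el i).K, nsq3 (curl3 (w i) x))
/-- broken `H¹` seminorm of the curl, `|curl v|_{1,h}`. -/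
def semiCurl (M : Mesh) (w : DiscVF M) : ℝ :=
  Real.sqrt (∑ i, ∫ x in (M.el i).K, nsqM (jac3 (curl3 (w i)) x))
/-- the norm `‖v‖_{ε,h}`. -/
def epsNorm (ε : ℝ) (M : Mesh) (w : DiscVF M) : ℝ :=
  Real.sqrt ((L2d M w) ^ 2 + (L2curl M w) ^ 2 + ε ^ 2 * (semiCurl M w) ^ 2)
/-- broken `H¹` seminorm of a piecewise scalar field. -/
def semiGrad (M : Mesh) (μ : DiscSF M) : ℝ :=
  Real.sqrt (∑ i, ∫ x in (M.el i).K, nsq3 (grad3 (μ i) x))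

/-- `a_h(w,v) = Σ_K (∇curl w, ∇curl v)_K`. -/
def ah (M : Mesh) (w v : DiscVF M) : ℝ :=
  ∑ i, ∫ x in (M.el i).K, dotM (jac3 (curl3 (w i)) x) (jac3 (curl3 (v i)) x)
/-- `b(w,v) = (curl w, curl v)`. -/
def bh (M : Mesh) (w v : DiscVF M) : ℝ :=
  ∑ i, ∫ x in (M.el i).K, dot3 (curl3 (w i) x) (curl3 (v i) x)
/-- `c(v,μ) = (v, ∇μ)`. -/
def ch (M : Mesh) (v : DiscVF M) (μ : DiscSF M) : ℝ :=
  ∑ i, ∫ x in (M.el i).K, dot3 (v i x) (grad3 (μ i) x)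
/-- load functional `(f, v)`. -/
def fpair (M : Mesh) (f : Vec → Vec) (v : DiscVF M) : ℝ :=
  ∑ i, ∫ x in (M.el i).K, dot3 (f x) (v i x)

/-- `a_h(u, v_h)` with a continuous first argument, given by `J = ∇curl u`. -/
def ahC (M : Mesh) (J : Vec → Mat) (v : DiscVF M) : ℝ :=
  ∑ i, ∫ x in (M.el i).K, dotM (J x) (jac3 (curl3 (v i)) x)
/-- `b(u, v_h)` with a continuous first argument, given by `cu = curl u`. -/
def bhC (M : Mesh) (cu : Vec → Vec) (v : DiscVF M) : ℝ :=
  ∑ i, ∫ x in (M.el i).K, dot3 (cu x) (curl3 (v i) x)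

/-- broken `L²` distance between a function and a piecewise field. -/
def errL2 (M : Mesh) (v : Vec → Vec) (w : DiscVF M) : ℝ :=
  Real.sqrt (∑ i, ∫ x in (M.el i).K, nsq3 (v x - w i x))
/-- broken `L²` distance of curls, the first argument given by `cu = curl u`. -/
def errCurl (M : Mesh) (cu : Vec → Vec) (w : DiscVF M) : ℝ :=
  Real.sqrt (∑ i, ∫ x in (M.el i).K, nsq3 (cu x - curl3 (w i) x))
/-- broken `H¹` distance of curls, the first argument given by `J = ∇curl u`. -/
def errSemi (M : Mesh) (J : Vec → Mat) (w : DiscVF M) : ℝ :=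
  Real.sqrt (∑ i, ∫ x in (M.el i).K, nsqM (J x - jac3 (curl3 (w i)) x))
/-- error in the `‖·‖_{ε,h}` norm between `u` (with `curl u = cu`, `∇curl u = J`)
and a piecewise field `w`. -/
def errNorm (ε : ℝ) (M : Mesh) (u cu : Vec → Vec) (J : Vec → Mat) (w : DiscVF M) : ℝ :=
  Real.sqrt ((errL2 M u w) ^ 2 + (errCurl M cu w) ^ 2 + ε ^ 2 * (errSemi M J w) ^ 2)
/-- broken `H¹` distance between a function with Jacobian `J` and a piecewise field. -/
def errJac (M : Mesh) (J : Vec → Mat) (w : DiscVF M) : ℝ :=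
  Real.sqrt (∑ i, ∫ x in (M.el i).K, nsqM (J x - jac3 (w i) x))

/-- sum of a quantity over the boundary faces of the mesh. -/
def bdrySum (M : Mesh) (Ω : Set Vec) (g : Fin M.n → Fin 4 → ℝ) : ℝ :=
  ∑ i, ∑ a, if (M.el i).face a ⊆ frontier Ω then g i a else 0

/-- the boundary part `ε² Σ_{F⊆∂Ω} h_F⁻¹ ‖curl v‖²_F` of the Nitsche norm. -/
def tripExtra (ε : ℝ) (M : Mesh) (Ω : Set Vec) (v : DiscVF M) : ℝ :=
  ε ^ 2 * bdrySum M Ω fun i a =>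
    (hF (M.el i) a)⁻¹ * faceInt2 (M.el i) a fun x => nsq3 (curl3 (v i) x)
/-- the Nitsche norm `|||v|||_{ε,h}`. -/
def tripNorm (ε : ℝ) (M : Mesh) (Ω : Set Vec) (v : DiscVF M) : ℝ :=
  Real.sqrt ((epsNorm ε M v) ^ 2 + tripExtra ε M Ω v)
/-- error in the Nitsche norm `|||·|||_{ε,h}`. -/
def errTrip (ε : ℝ) (M : Mesh) (Ω : Set Vec) (u cu : Vec → Vec) (J : Vec → Mat)
    (w : DiscVF M) : ℝ :=
  Real.sqrt ((errNorm ε M u cu J w) ^ 2 + ε ^ 2 * bdrySum M Ω fun i a =>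
    (hF (M.el i) a)⁻¹ * faceInt2 (M.el i) a fun x => nsq3 (cu x - curl3 (w i) x))

/-- the Nitsche bilinear form `ã_h` on discrete functions. -/
def atildeD (σ : ℝ) (M : Mesh) (Ω : Set Vec) (w v : DiscVF M) : ℝ :=
  ah M w v
  - bdrySum M Ω (fun i a => faceInt2 (M.el i) a fun x =>
      dot3 (japply (jac3 (curl3 (w i)) x) ((M.el i).outNormal a)) (curl3 (v i) x))
  - bdrySum M Ω (fun i a => faceInt2 (M.el i) a fun x =>
      dot3 (curl3 (w i) x) (japply (jac3 (curl3 (v i)) x) ((M.el i).outNormal a)))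
  + bdrySum M Ω (fun i a => (σ / hF (M.el i) a) * faceInt2 (M.el i) a fun x =>
      dot3 (curl3 (w i) x) (curl3 (v i) x))

/-- the Nitsche form `ã_h(u, v_h)` with continuous first argument `u`
(`cu = curl u`, `J = ∇curl u`). -/
def atildeC (σ : ℝ) (M : Mesh) (Ω : Set Vec) (cu : Vec → Vec) (J : Vec → Mat)
    (v : DiscVF M) : ℝ :=
  ahC M J v
  - bdrySum M Ω (fun i a => faceInt2 (M.el i) a fun x =>
      dot3 (japply (J x) ((M.el i).outNormal a)) (curl3 (v i) x))
  - bdrySum M Ω (fun i a => faceInt2 (M.el i) a fun x =>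
      dot3 (cu x) (japply (jac3 (curl3 (v i)) x) ((M.el i).outNormal a)))
  + bdrySum M Ω (fun i a => (σ / hF (M.el i) a) * faceInt2 (M.el i) a fun x =>
      dot3 (cu x) (curl3 (v i) x))
/-! ### Sobolev spaces via weak (distributional) derivatives -/

/-- smooth compactly supported scalar test functions on ℝ³. -/
def TestS (φ : Vec → ℝ) : Prop := ContDiff ℝ (⊤ : ℕ∞) φ ∧ HasCompactSupport φ
/-- smooth compactly supported vector test functions on ℝ³. -/
def TestV (φ : Vec → Vec) : Prop := ContDiff ℝ (⊤ : ℕ∞) φ ∧ HasCompactSupport φ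

/-- extension by zero outside `Ω`. -/
def zextS (Ω : Set Vec) (f : Vec → ℝ) : Vec → ℝ := Ω.indicator f
/-- extension by zero outside `Ω` (vector-valued). -/
def zextV (Ω : Set Vec) (v : Vec → Vec) : Vec → Vec := Ω.indicator v

/-- membership in `L²(Ω)`. -/
def MemL2S (Ω : Set Vec) (f : Vec → ℝ) : Prop := MemLp f 2 (volume.restrict Ω)
/-- membership in `L²(Ω;ℝ³)`. -/
def MemL2V (Ω : Set Vec) (v : Vec → Vec) : Prop := MemLp v 2 (volume.restrict Ω)

/-- `L²(Ω)` norm. -/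
def L2SΩ (Ω : Set Vec) (f : Vec → ℝ) : ℝ := Real.sqrt (∫ x in Ω, (f x) ^ 2)
/-- `L²(Ω;ℝ³)` norm. -/
def L2VΩ (Ω : Set Vec) (v : Vec → Vec) : ℝ := Real.sqrt (∫ x in Ω, nsq3 (v x))

/-- `g = ∂ᵢ f` in the sense of distributions on all of ℝ³. -/
def WkPD (i : Fin 3) (f g : Vec → ℝ) : Prop :=
  ∀ φ, TestS φ → ∫ x, g x * φ x = -∫ x, f x * pd i φ x
/-- `w = curl v` in the sense of distributions on all of ℝ³. -/
def WkCurlAll (v w : Vec → Vec) : Prop :=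
  ∀ φ, TestV φ → ∫ x, dot3 (w x) (φ x) = ∫ x, dot3 (v x) (curl3 φ x)
/-- `d = div v` in the sense of distributions on all of ℝ³. -/
def WkDivAll (v : Vec → Vec) (d : Vec → ℝ) : Prop :=
  ∀ φ, TestS φ → ∫ x, d x * φ x = -∫ x, dot3 (v x) (grad3 φ x)

/-- `g = ∂ᵢ f` in the sense of distributions on `Ω`. -/
def WkPDIn (Ω : Set Vec) (i : Fin 3) (f g : Vec → ℝ) : Prop :=
  ∀ φ, TestS φ → tsupport φ ⊆ Ω → ∫ x in Ω, g x * φ x = -∫ x in Ω, f x * pd i φ x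
/-- `J` is the distributional Jacobian of `v` on `Ω`. -/
def WkJacIn (Ω : Set Vec) (v : Vec → Vec) (J : Vec → Mat) : Prop :=
  ∀ a b, WkPDIn Ω b (fun x => v x a) fun x => J x a b
/-- `g = ∂^α f` (`α` a list of directions) in the sense of distributions on `Ω`. -/
def WkIterIn (Ω : Set Vec) (l : List (Fin 3)) (f g : Vec → ℝ) : Prop :=
  ∀ φ, TestS φ → tsupport φ ⊆ Ω →
    ∫ x in Ω, g x * φ x = (-1 : ℝ) ^ l.length * ∫ x in Ω, f x * pdIter l φ x
/-- `div v = 0` in the sense of distributions on `Ω`. -/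
def WkDivFree (Ω : Set Vec) (v : Vec → Vec) : Prop :=
  ∀ φ, TestS φ → tsupport φ ⊆ Ω → ∫ x in Ω, dot3 (v x) (grad3 φ x) = 0

/-- scalar `H₀¹(Ω)` (via zero extension), with weak gradient `g`. -/
def MemH01S (Ω : Set Vec) (f : Vec → ℝ) (g : Vec → Vec) : Prop :=
  MemL2S Ω f ∧ MemL2V Ω g ∧ ∀ i, WkPD i (zextS Ω f) fun x => zextV Ω g x i
/-- `H₀(curl,Ω)` (via zero extension), with weak curl `cv`. -/
def MemH0Curl (Ω : Set Vec) (v cv : Vec → Vec) : Prop :=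
  MemL2V Ω v ∧ MemL2V Ω cv ∧ WkCurlAll (zextV Ω v) (zextV Ω cv)
/-- `H₀(div,Ω)` (via zero extension), with weak divergence `d`. -/
def MemH0Div (Ω : Set Vec) (v : Vec → Vec) (d : Vec → ℝ) : Prop :=
  MemL2V Ω v ∧ MemL2S Ω d ∧ WkDivAll (zextV Ω v) (zextS Ω d)
/-- vector `H₀¹(Ω;ℝ³)` (via zero extension), with weak Jacobian `J`. -/
def MemH01V (Ω : Set Vec) (v : Vec → Vec) (J : Vec → Mat) : Prop :=
  MemL2V Ω v ∧ (∀ a b, MemL2S Ω fun x => J x a b) ∧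
    ∀ a b, WkPD b (zextS Ω fun x => v x a) (zextS Ω fun x => J x a b)
/-- `H₀(grad curl, Ω)`: `u ∈ H₀(curl)` with `curl u = cu ∈ H₀¹(Ω;ℝ³)`, `J = ∇cu`. -/
def MemH0GC (Ω : Set Vec) (u cu : Vec → Vec) (J : Vec → Mat) : Prop :=
  MemH0Curl Ω u cu ∧ MemH01V Ω cu J

/-- membership in `H^j(Ω)` componentwise via iterated distributional derivatives `D`,
indexed by multi-indices `α : Fin j → Fin 3` and components `c : Fin 3`. -/
def MemHiter (Ω : Set Vec) (j : ℕ) (v : Vec → Vec)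
    (D : (Fin j → Fin 3) → Fin 3 → Vec → ℝ) : Prop :=
  ∀ α c, WkIterIn Ω (List.ofFn α) (fun x => v x c) (D α c) ∧ MemL2S Ω (D α c)
/-- the `H^j(Ω)` seminorm built from the iterated derivatives `D`. -/
def semiIter (Ω : Set Vec) (j : ℕ) (D : (Fin j → Fin 3) → Fin 3 → Vec → ℝ) : ℝ :=
  Real.sqrt (∑ α : Fin j → Fin 3, ∑ c : Fin 3, ∫ x in Ω, (D α c x) ^ 2)
/-- the `H¹(Ω)` seminorm of a vector field with Jacobian `J`. -/
def semiJ (Ω : Set Vec) (J : Vec → Mat) : ℝ := Real.sqrt (∫ x in Ω, nsqM (J x))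

/-- the `H^s(Ω)` seminorm, `1 ≤ s ≤ 2`, of a vector field with Jacobian `J` and second
derivatives `D2`; for `1 < s < 2` the Sobolev–Slobodeckij seminorm of the gradient. -/
def semiHsVec (Ω : Set Vec) (s : ℝ) (J : Vec → Mat)
    (D2 : (Fin 2 → Fin 3) → Fin 3 → Vec → ℝ) : ℝ :=
  if s = 1 then semiJ Ω J
  else if s = 2 then semiIter Ω 2 D2
  else Real.sqrt (∑ a : Fin 3, ∑ b : Fin 3,
    ∫ x in Ω, ∫ y in Ω, (J x a b - J y a b) ^ 2 / dist x y ^ (3 + 2 * (s - 1)))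
/-- membership in `H^s(Ω;ℝ³)`, `1 ≤ s ≤ 2`, with data `(J, D2)`. -/
def MemHsVec (Ω : Set Vec) (s : ℝ) (v : Vec → Vec) (J : Vec → Mat)
    (D2 : (Fin 2 → Fin 3) → Fin 3 → Vec → ℝ) : Prop :=
  WkJacIn Ω v J ∧ (∀ a b, MemL2S Ω fun x => J x a b) ∧
  (s = 2 → MemHiter Ω 2 v D2) ∧
  (1 < s → s < 2 → ∀ a b, Integrable
    (fun p : Vec × Vec => (J p.1 a b - J p.2 a b) ^ 2 / dist p.1 p.2 ^ (3 + 2 * (s - 1)))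
    ((volume.restrict Ω).prod (volume.restrict Ω)))

/-! ### The continuous problems -/

/-- weak solution of the quad-curl singular perturbation problem
`ε² curl⁴u + curl²u = f`, `div u = 0`, `u × n = curl u = 0` on `∂Ω`
(mixed formulation with multiplier `λ = 0`): here `cu = curl u`, `J = ∇curl u`. -/
def IsQuadCurlSol (Ω : Set Vec) (ε : ℝ) (f u cu : Vec → Vec) (J : Vec → Mat) : Prop :=
  MemH0GC Ω u cu J ∧ WkDivFree Ω u ∧
  ∀ v cv Jv, MemH0GC Ω v cv Jv →
    ε ^ 2 * (∫ x in Ω, dotM (J x) (Jv x)) + (∫ x in Ω, dot3 (cu x) (cv x))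
      = ∫ x in Ω, dot3 (f x) (v x)

/-- weak solution of the reduced double curl problem
`curl²u₀ = f`, `div u₀ = 0`, `u₀ × n = 0` on `∂Ω`; here `cu0 = curl u₀`. -/
def IsReducedSol (Ω : Set Vec) (f u0 cu0 : Vec → Vec) : Prop :=
  MemH0Curl Ω u0 cu0 ∧ WkDivFree Ω u0 ∧
  ∀ v cv, MemH0Curl Ω v cv →
    (∫ x in Ω, dot3 (cu0 x) (cv x)) = ∫ x in Ω, dot3 (f x) (v x)

/-- the continuous mixed formulation: `u ∈ H₀(grad curl)`, `λ ∈ H₀¹`,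
`ε²a(u,v) + b(u,v) + c(v,λ) = (f,v)` and `c(u,μ) = 0`. -/
def MixedSol (Ω : Set Vec) (ε : ℝ) (f u cu : Vec → Vec) (J : Vec → Mat)
    (lam : Vec → ℝ) (glam : Vec → Vec) : Prop :=
  MemH0GC Ω u cu J ∧ MemH01S Ω lam glam ∧
  (∀ v cv Jv, MemH0GC Ω v cv Jv →
    ε ^ 2 * (∫ x in Ω, dotM (J x) (Jv x)) + (∫ x in Ω, dot3 (cu x) (cv x))
      + (∫ x in Ω, dot3 (v x) (glam x)) = ∫ x in Ω, dot3 (f x) (v x)) ∧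
  (∀ μ gμ, MemH01S Ω μ gμ → ∫ x in Ω, dot3 (u x) (gμ x) = 0)

/-! ### Discrete methods -/

/-- the mixed finite element method (4.1)-(4.2). -/
def DiscMixedSol (k : ℕ) (M : Mesh) (Ω : Set Vec) (ε : ℝ) (f : Vec → Vec)
    (u : DiscVF M) (lam : DiscSF M) : Prop :=
  MemWh0 k M Ω u ∧ MemVhg k M Ω lam ∧
  (∀ v, MemWh0 k M Ω v → ε ^ 2 * ah M u v + bh M u v + ch M v lam = fpair M f v) ∧
  (∀ μ, MemVhg k M Ω μ → ch M u μ = 0)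

/-- the Nitsche-modified mixed finite element method (5.1)-(5.2). -/
def DiscNitscheSol (k : ℕ) (M : Mesh) (Ω : Set Vec) (σ ε : ℝ) (f : Vec → Vec)
    (u : DiscVF M) (lam : DiscSF M) : Prop :=
  MemWh k M Ω u ∧ MemVhg k M Ω lam ∧
  (∀ v, MemWh k M Ω v →
    ε ^ 2 * atildeD σ M Ω u v + bh M u v + ch M v lam = fpair M f v) ∧
  (∀ μ, MemVhg k M Ω μ → ch M u μ = 0)

/-! ### Falk–Winther projections and derived interpolation operators -/

/-- The Falk–Winther local bounded commuting projections onto the Lagrange, Nédélec and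
BDM spaces, together with the properties used in the paper. `avg` plays the role of the
projection `Q_h` onto piecewise constants. -/
structure FW (k : ℕ) (M : Mesh) (Ω : Set Vec) where
  Ig : (Vec → ℝ) → DiscSF M
  IND : (Vec → Vec) → DiscVF M
  IBDM : (Vec → Vec) → DiscVF M
  mapsIg : ∀ v gv, MemH01S Ω v gv → MemVhg k M Ω (Ig v)
  mapsIND : ∀ v cv, MemH0Curl Ω v cv → MemVND k M Ω (IND v)
  mapsIBDM : ∀ v dv, MemH0Div Ω v dv → MemVBDM M Ω (IBDM v)
  zeroIBDM : ∀ i x, IBDM (fun _ => (0 : Vec)) i x = 0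
  comm_grad : ∀ v gv, MemH01S Ω v gv → ∀ i, ∀ x ∈ (M.el i).K, IND gv i x = grad3 (Ig v i) x
  comm_curl : ∀ v cv, MemH0Curl Ω v cv → ∀ i, ∀ x ∈ (M.el i).K, IBDM cv i x = curl3 (IND v i) x
  comm_div : ∀ v dv, MemH0Div Ω v dv → ∀ i, ∀ x ∈ (M.el i).K, div3 (IBDM v i) x = avg M dv i

/-- DoF-matching conditions defining the interpolations `I_{h0}^d`, `I_h^d` into the
Tai–Winther spaces relative to a given piecewise field `B` (namely `I_h^{BDM}v`): the
normal face DoFs match, and on interior faces the tangential DoFs match the face average. -/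
def MatchIdInt (M : Mesh) (B w : DiscVF M) : Prop :=
  (∀ i a, ∀ q, PolyDeg 1 q → faceNorMoment (M.el i) a (w i) q = faceNorMoment (M.el i) a (B i) q) ∧
  (∀ i j a b, i ≠ j → (M.el i).face a = (M.el j).face b →
    ∀ q, MemRT ((M.el i).outNormal a) q →
      faceTanMoment (M.el i) a (w i) q
        = (faceTanMoment (M.el i) a (B i) q + faceTanMoment (M.el i) a (B j) q) / 2)

/-- `w = I_{h0}^d v` where `B = I_h^{BDM} v`. -/
def IsId0 (M : Mesh) (Ω : Set Vec) (B w : DiscVF M) : Prop :=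
  MemVh0d M Ω w ∧ MatchIdInt M B w

/-- `w = I_h^d v` where `B = I_h^{BDM} v`: additionally the tangential DoFs on boundary
faces match those of `B`. -/
def IsId (M : Mesh) (Ω : Set Vec) (B w : DiscVF M) : Prop :=
  MemVhd M Ω w ∧ MatchIdInt M B w ∧
  ∀ i a, (M.el i).face a ⊆ frontier Ω →
    ∀ q, MemRT ((M.el i).outNormal a) q →
      faceTanMoment (M.el i) a (w i) q = faceTanMoment (M.el i) a (B i) q

/-- DoF-matching conditions defining `I_{h0}^{gc}`, `I_h^{gc}` relative to a given
piecewise field `N` (namely `I_h^{ND}v`). -/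
def MatchIgcInt (k : ℕ) (M : Mesh) (N w : DiscVF M) : Prop :=
  (∀ i a b, a ≠ b → ∀ q, PolyDeg k q →
     edgeMoment (M.el i) a b (w i) q = edgeMoment (M.el i) a b (N i) q) ∧
  (∀ i a, ∀ q, MemRM k ((M.el i).outNormal a) q →
     faceTanMoment (M.el i) a (w i) q = faceTanMoment (M.el i) a (N i) q) ∧
  (∀ i j a b, i ≠ j → (M.el i).face a = (M.el j).face b →
    ∀ q, MemRT ((M.el i).outNormal a) q →
      faceTanMoment (M.el i) a (curl3 (w i)) q
        = (faceTanMoment (M.el i) a (curl3 (N i)) q + faceTanMoment (M.el i) a (curl3 (N j)) q) / 2)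

/-- `w = I_{h0}^{gc} v` where `N = I_h^{ND} v`. -/
def IsIgc0 (k : ℕ) (M : Mesh) (Ω : Set Vec) (N w : DiscVF M) : Prop :=
  MemWh0 k M Ω w ∧ MatchIgcInt k M N w

/-- `w = I_h^{gc} v` where `N = I_h^{ND} v`. -/
def IsIgc (k : ℕ) (M : Mesh) (Ω : Set Vec) (N w : DiscVF M) : Prop :=
  MemWh k M Ω w ∧ MatchIgcInt k M N w ∧
  ∀ i a, (M.el i).face a ⊆ frontier Ω →
    ∀ q, MemRT ((M.el i).outNormal a) q →
      faceTanMoment (M.el i) a (curl3 (w i)) q = faceTanMoment (M.el i) a (curl3 (N i)) q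

/-- `B` maps `H₀(div,Ω)` into the BDM space. -/
def BDMmaps (M : Mesh) (Ω : Set Vec) (B : (Vec → Vec) → DiscVF M) : Prop :=
  ∀ v dv, MemH0Div Ω v dv → MemVBDM M Ω (B v)
/-- the Falk–Winther `L²`-bound `‖I_h^{BDM}v‖₀ ≲ ‖v‖₀ + h‖div v‖₀`. -/
def BDMbound (M : Mesh) (Ω : Set Vec) (B : (Vec → Vec) → DiscVF M) (C₀ : ℝ) : Prop :=
  ∀ v dv, MemH0Div Ω v dv → L2d M (B v) ≤ C₀ * (L2VΩ Ω v + M.hsize * L2SΩ Ω dv)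
/-- the elementwise Falk–Winther error estimates
`Σ_K h_K^{2(i-j)} |v - I_h^{BDM}v|²_{i,K} ≲ |v|_j²` for `i = 0,1`, `j = 1,2`. -/
def BDMest (M : Mesh) (Ω : Set Vec) (B : (Vec → Vec) → DiscVF M) (C₀ : ℝ) : Prop :=
  (∀ v dv Jv, MemH0Div Ω v dv → WkJacIn Ω v Jv →
     (∑ i, (Metric.diam (M.el i).K) ^ (-2 : ℝ) * ∫ x in (M.el i).K, nsq3 (v x - B v i x))
       + (∑ i, ∫ x in (M.el i).K, nsqM (Jv x - jac3 (B v i) x)) ≤ C₀ * (semiJ Ω Jv) ^ 2) ∧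
  (∀ v dv Jv D2, MemH0Div Ω v dv → WkJacIn Ω v Jv → MemHiter Ω 2 v D2 →
     (∑ i, (Metric.diam (M.el i).K) ^ (-4 : ℝ) * ∫ x in (M.el i).K, nsq3 (v x - B v i x))
       + (∑ i, (Metric.diam (M.el i).K) ^ (-2 : ℝ) * ∫ x in (M.el i).K, nsqM (Jv x - jac3 (B v i) x))
       ≤ C₀ * (semiIter Ω 2 D2) ^ 2)

/-! ### Subspaces for the dimension count -/

/-- the subspace `∇P_{k+1}` of vector fields. -/
def gradSpace (k : ℕ) : Submodule ℝ (Vec → Vec) :=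
  Submodule.span ℝ {v | ∃ q, PolyDeg (k + 1) q ∧ v = fun x => grad3 q x}
/-- the subspace `x × P₁(ℝ³;ℝ³)`. -/
def crossSpace : Submodule ℝ (Vec → Vec) :=
  Submodule.span ℝ {v | ∃ p, VPolyDeg 1 p ∧ v = fun x => cross3 x (p x)}
/-- the subspace `b_K P₁(ℝ³;ℝ³)`. -/
def bubbleSpace (T : Tetra) : Submodule ℝ (Vec → Vec) :=
  Submodule.span ℝ {v | ∃ b r, T.IsBubble b ∧ VPolyDeg 1 r ∧ v = fun x => b x • r x}

theorem haus_image {E : Type} [NormedAddCommGroup E] [NormedSpace ℝ E] [FiniteDimensional ℝ E]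
    [MeasurableSpace E] [BorelSpace E] (d : ℝ) (hd : 0 ≤ d) (vol : Measure E) [vol.IsAddHaarMeasure]
    (hE : (μH[d] : Measure E) = vol) (p : Vec) (A : E →ₗ[ℝ] Vec) (hA : Function.Injective A) :
    ∃ c : ℝ, c ≠ 0 ∧ ∀ (S : Set E) (g : Vec → ℝ),
      ∫ x in (fun y => p + A y) '' S, g x ∂μH[d] = c * ∫ y in S, g (p + A y) ∂vol := by
  obtain ⟨C, hC0, hC⟩ := A.exists_antilipschitzWith (LinearMap.ker_eq_bot.2 hA)
  set φ : E → Vec := fun y => p + A y with hφ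
  have hlip : LipschitzWith ‖A.toContinuousLinearMap‖₊ φ := by
    have := A.toContinuousLinearMap.lipschitz
    intro x y
    simpa [hφ] using this x y
  have hanti : AntilipschitzWith C φ := by
    intro x y
    simpa [hφ] using hC x y
  have hemb : MeasurableEmbedding φ :=
    (hanti.isClosedEmbedding hlip.uniformContinuous).measurableEmbedding
  set ν : Measure E := (μH[d] : Measure Vec).comap φ with hν
  have hap : ∀ s, ν s = μH[d] (φ '' s) := fun s => hemb.comap_apply _ _
  have h1 : ν.IsAddLeftInvariant := by
    constructor
    intro g
    ext s hs
    rw [Measure.map_apply (measurable_const_add g) hs, hap, hap]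
    have : φ '' s = (fun x => A g + x) '' (φ '' ((fun x => g + x) ⁻¹' s)) := by
      ext z
      constructor
      · rintro ⟨y, hy, rfl⟩
        refine ⟨_, ⟨y - g, by simpa using hy, rfl⟩, ?_⟩
        simp [hφ]; abel
      · rintro ⟨_, ⟨y, hy, rfl⟩, rfl⟩
        refine ⟨g + y, hy, ?_⟩
        simp only [hφ, map_add]; abel
    rw [this]
    exact ((isometry_add_left (A g)).hausdorffMeasure_image (Or.inl hd) _).symm
  have h2 : IsFiniteMeasureOnCompacts ν := by
    constructor
    intro K hK
    rw [hap]
    refine (hlip.hausdorffMeasure_image_le hd K).trans_lt ?_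
    rw [hE]
    exact ENNReal.mul_lt_top (ENNReal.rpow_lt_top_of_nonneg hd ENNReal.coe_ne_top) hK.measure_lt_top
  have h3 : ν.IsOpenPosMeasure := by
    constructor
    intro U hU hne h0
    have := hanti.le_hausdorffMeasure_image hd U
    rw [← hap, h0, mul_zero, hE] at this
    exact (hU.measure_pos vol hne).ne' (le_antisymm this bot_le)
  have h4 : ν.IsAddHaarMeasure := {}
  have h5 := Measure.isAddLeftInvariant_eq_smul ν vol
  have h6 := Measure.addHaarScalarFactor_pos_of_isAddHaarMeasure ν vol
  refine ⟨_, (NNReal.coe_pos.2 h6).ne', fun S g => ?_⟩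
  have : (μH[d] : Measure Vec).restrict (φ '' S) = (ν.restrict S).map φ := by
    rw [← Set.preimage_image_eq S hemb.injective, ← hemb.restrict_map, hν, hemb.map_comap,
      Measure.restrict_restrict_of_subset (by simp), Set.preimage_image_eq S hemb.injective]
  rw [this, hemb.integral_map]
  conv_lhs => rw [h5]
  rw [Measure.restrict_smul, integral_smul_nnreal_measure]
  rfl

theorem edge_image (x y : Vec) (hxy : x ≠ y) : ∃ c : ℝ, c ≠ 0 ∧ ∀ g : Vec → ℝ,
    ∫ z in segment ℝ x y, g z ∂μH[1] = c * ∫ s in (0:ℝ)..1, g (x + s • (y - x)) := by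
  obtain ⟨c, hc, h⟩ := haus_image 1 zero_le_one volume hausdorffMeasure_real x
    (LinearMap.toSpanSingleton ℝ Vec (y - x))
    (by
      rw [← LinearMap.ker_eq_bot]
      exact LinearMap.ker_toSpanSingleton ℝ (sub_ne_zero.2 hxy.symm))
  refine ⟨c, hc, fun g => ?_⟩
  rw [segment_eq_image', intervalIntegral.integral_of_le zero_le_one, ← integral_Icc_eq_integral_Ioc]
  exact h (Set.Icc 0 1) g

/-- reference triangle -/
def tri : Set (ℝ × ℝ) := {p | p.1 ∈ Set.Icc (0:ℝ) 1 ∧ p.2 ∈ Set.Icc 0 (1 - p.1)}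

theorem hull3_eq (x y z : Vec) : convexHull ℝ {x, y, z} =
    (fun p : ℝ × ℝ => x + (p.1 • (y - x) + p.2 • (z - x))) '' tri := by
  rw [convexHull_insert (by simp), convexHull_pair]
  ext w
  simp only [mem_convexJoin, segment_eq_image', Set.mem_image, Set.mem_singleton_iff, exists_eq_left]
  constructor
  · rintro ⟨_, ⟨t, ht, rfl⟩, u, hu, rfl⟩
    refine ⟨(u * (1 - t), u * t), ⟨⟨?_, ?_⟩, ?_, ?_⟩, ?_⟩
    · exact mul_nonneg hu.1 (by linarith [ht.2])
    · nlinarith [hu.1, hu.2, ht.1, ht.2, mul_nonneg hu.1 ht.1]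
    · exact mul_nonneg hu.1 ht.1
    · simp only; nlinarith [hu.2]
    · ext i; simp; ring
  · rintro ⟨⟨s, t⟩, ⟨h1, h2⟩, rfl⟩
    simp only [Set.mem_Icc] at h1 h2
    rcases eq_or_ne (s + t) 0 with h0 | h0
    · have hs : s = 0 := by linarith
      have ht : t = 0 := by linarith
      refine ⟨_, ⟨0, by simp, rfl⟩, 0, by simp, ?_⟩
      simp [hs, ht]
    · have hpos : 0 < s + t := lt_of_le_of_ne (by linarith) h0.symm
      refine ⟨_, ⟨t / (s + t), ⟨div_nonneg h2.1 hpos.le, by rw [div_le_one hpos]; linarith⟩, rfl⟩, s + t,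
        ⟨hpos.le, by linarith⟩, ?_⟩
      ext i; simp; field_simp; ring

theorem face_image (x y z : Vec) (h : LinearIndependent ℝ ![y - x, z - x]) :
    ∃ c : ℝ, c ≠ 0 ∧ ∀ g : Vec → ℝ,
    ∫ w in convexHull ℝ {x, y, z}, g w ∂μH[2] =
      c * ∫ p in tri, g (x + (p.1 • (y - x) + p.2 • (z - x))) := by
  obtain ⟨c, hc, h⟩ := haus_image 2 zero_le_two volume hausdorffMeasure_prod_real x
    ((LinearMap.toSpanSingleton ℝ Vec (y - x)).coprod (LinearMap.toSpanSingleton ℝ Vec (z - x)))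
    (by
      rw [← LinearMap.ker_eq_bot, LinearMap.ker_eq_bot']
      rintro ⟨s, t⟩ hst
      rw [LinearIndependent.pair_iff] at h
      have := h s t (by simpa using hst)
      simp [this.1, this.2])
  refine ⟨c, hc, fun g => ?_⟩
  rw [hull3_eq]
  exact h tri g

theorem tri_compact : IsCompact tri := by
  have hcl : IsClosed tri := by
    have : tri = {p : ℝ × ℝ | 0 ≤ p.1} ∩ {p | p.1 ≤ 1} ∩ {p | 0 ≤ p.2} ∩ {p | p.2 ≤ 1 - p.1} := by
      ext p; simp [tri, and_assoc]
    rw [this]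
    refine ((IsClosed.inter ?_ ?_).inter ?_).inter ?_ <;>
      apply isClosed_le <;> fun_prop
  refine (isCompact_Icc (a := ((0, 0) : ℝ × ℝ)) (b := (1, 1))).of_isClosed_subset hcl ?_
  rintro ⟨s, t⟩ ⟨h1, h2⟩
  simp only [Set.mem_Icc] at h1 h2
  exact ⟨⟨h1.1, h2.1⟩, ⟨h1.2, by simp only; linarith⟩⟩

theorem tri_int (f : ℝ → ℝ → ℝ) (hf : Continuous fun p : ℝ × ℝ => f p.1 p.2) :
    ∫ p in tri, f p.1 p.2 = ∫ s in (0:ℝ)..1, ∫ t in (0:ℝ)..(1 - s), f s t := by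
  have hm : MeasurableSet tri := tri_compact.measurableSet
  rw [← integral_indicator hm, Measure.volume_eq_prod, integral_prod]
  · rw [intervalIntegral.integral_of_le zero_le_one, ← integral_Icc_eq_integral_Ioc,
      ← integral_indicator measurableSet_Icc]
    congr 1
    ext s
    by_cases hs : s ∈ Set.Icc (0:ℝ) 1
    · rw [Set.indicator_of_mem hs, intervalIntegral.integral_of_le (by linarith [hs.2]),
        ← integral_Icc_eq_integral_Ioc, ← integral_indicator measurableSet_Icc]
      congr 1
      ext t
      have : (s, t) ∈ tri ↔ t ∈ Set.Icc 0 (1 - s) := ⟨fun h => h.2, fun h => ⟨hs, h⟩⟩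
      by_cases ht : t ∈ Set.Icc 0 (1 - s)
      · rw [Set.indicator_of_mem ht, Set.indicator_of_mem (this.2 ht)]
      · rw [Set.indicator_of_notMem ht, Set.indicator_of_notMem (fun h => ht (this.1 h))]
    · rw [Set.indicator_of_notMem hs]
      have : ∀ t, tri.indicator (fun p : ℝ × ℝ => f p.1 p.2) (s, t) = 0 := by
        intro t
        apply Set.indicator_of_notMem
        intro h
        exact hs h.1
      simp [this]
  · rw [← Measure.volume_eq_prod]
    exact (hf.continuousOn.integrableOn_compact tri_compact).integrable_indicator hm

/-- Bernstein monomial. -/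
def bmon (i j k : ℕ) (p : ℝ × ℝ) : ℝ := (1 - p.1 - p.2) ^ i * p.1 ^ j * p.2 ^ k

theorem beta_int (L : ℝ) (i : ℕ) : ∀ k : ℕ, ∫ t in (0:ℝ)..L, (L - t) ^ i * t ^ k =
    (i.factorial * k.factorial : ℝ) / (i + k + 1).factorial * L ^ (i + k + 1) := by
  induction i with
  | zero =>
    intro k
    simp only [pow_zero, one_mul, integral_pow, Nat.factorial_zero, zero_add, Nat.factorial_succ]
    have : (k.factorial : ℝ) ≠ 0 := by exact_mod_cast k.factorial_ne_zero
    push_cast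
    field_simp
    simp
  | succ i ih =>
    intro k
    have hd : ∀ t ∈ Set.uIcc (0:ℝ) L, HasDerivAt (fun t => (L - t) ^ (i + 1) * (t ^ (k + 1) / (k + 1)))
        ((L - t) ^ (i + 1) * t ^ k - (i + 1) / (k + 1) * ((L - t) ^ i * t ^ (k + 1))) t := by
      intro t _
      have h1 : HasDerivAt (fun t => (L - t) ^ (i + 1)) (((i + 1 : ℕ) : ℝ) * (L - t) ^ i * (-1)) t := by
        have := ((hasDerivAt_id t).const_sub L).fun_pow (i + 1)
        simpa using this
      have h2 : HasDerivAt (fun t : ℝ => t ^ (k + 1) / ((k : ℝ) + 1))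
          (((k + 1 : ℕ) : ℝ) * t ^ k / ((k : ℝ) + 1)) t := by
        have := (hasDerivAt_pow (k + 1) t).div_const ((k : ℝ) + 1)
        simpa using this
      refine (h1.mul h2).congr_deriv ?_
      push_cast
      field_simp
      ring
    have hint := intervalIntegral.integral_eq_sub_of_hasDerivAt hd
      (by apply Continuous.intervalIntegrable; fun_prop)
    rw [intervalIntegral.integral_sub (by apply Continuous.intervalIntegrable; fun_prop)
      (by apply Continuous.intervalIntegrable; fun_prop), intervalIntegral.integral_const_mul,
      ih (k + 1)] at hint
    simp only [sub_self, ne_eq, Nat.add_eq_zero_iff, one_ne_zero, and_false, not_false_eq_true,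
      zero_pow, zero_mul, zero_div, mul_zero] at hint
    rw [sub_eq_zero.1 hint]
    have e : i + (k + 1) + 1 = i + 1 + k + 1 := by ring
    rw [e, Nat.factorial_succ k, Nat.factorial_succ i]
    push_cast
    field_simp

theorem bint (i j k : ℕ) :
    ∫ p in tri, bmon i j k p =
      (i.factorial * j.factorial * k.factorial : ℝ) / (i + j + k + 2).factorial := by
  have := tri_int (fun s t => (1 - s - t) ^ i * s ^ j * t ^ k) (by fun_prop)
  unfold bmon
  rw [this]
  have h1 : ∀ s : ℝ, ∫ t in (0:ℝ)..(1 - s), (1 - s - t) ^ i * s ^ j * t ^ k =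
      (i.factorial * k.factorial : ℝ) / (i + k + 1).factorial * ((1 - s) ^ (i + k + 1) * s ^ j) := by
    intro s
    have : ∀ t : ℝ, (1 - s - t) ^ i * s ^ j * t ^ k = s ^ j * ((1 - s - t) ^ i * t ^ k) := by
      intro t; ring
    simp_rw [this]
    rw [intervalIntegral.integral_const_mul, beta_int]
    ring
  simp_rw [h1]
  rw [intervalIntegral.integral_const_mul, beta_int]
  have e : i + k + 1 + j + 1 = i + j + k + 2 := by ring
  have : ((i + k + 1).factorial : ℝ) ≠ 0 := by exact_mod_cast (i + k + 1).factorial_ne_zero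
  rw [e]
  field_simp
  simp

theorem bint_sum {N : ℕ} (c : Fin N → ℝ) (e : Fin N → ℕ × ℕ × ℕ) :
    ∫ p in tri, ∑ n, c n * bmon (e n).1 (e n).2.1 (e n).2.2 p =
      ∑ n, c n * (((e n).1.factorial * (e n).2.1.factorial * (e n).2.2.factorial : ℝ) /
        ((e n).1 + (e n).2.1 + (e n).2.2 + 2).factorial) := by
  rw [integral_finsetSum]
  · simp_rw [integral_const_mul, bint]
  · intro n _
    refine ContinuousOn.integrableOn_compact tri_compact ?_
    apply Continuous.continuousOn
    unfold bmon
    fun_prop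

theorem PolyDeg.mono {k l : ℕ} {f} (h : PolyDeg k f) (hkl : k ≤ l) : PolyDeg l f := by
  obtain ⟨p, hp, h⟩ := h
  exact ⟨p, hp.trans hkl, h⟩

theorem PolyDeg.add {k : ℕ} {f g} (hf : PolyDeg k f) (hg : PolyDeg k g) :
    PolyDeg k (fun x => f x + g x) := by
  obtain ⟨p, hp, h⟩ := hf
  obtain ⟨q, hq, h'⟩ := hg
  exact ⟨p + q, (MvPolynomial.totalDegree_add p q).trans (max_le hp hq), fun x => by simp [h, h']⟩

theorem PolyDeg.sub {k : ℕ} {f g} (hf : PolyDeg k f) (hg : PolyDeg k g) :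
    PolyDeg k (fun x => f x - g x) := by
  obtain ⟨p, hp, h⟩ := hf
  obtain ⟨q, hq, h'⟩ := hg
  exact ⟨p - q, (MvPolynomial.totalDegree_sub p q).trans (max_le hp hq), fun x => by simp [h, h']⟩

theorem PolyDeg.mul {k l : ℕ} {f g} (hf : PolyDeg k f) (hg : PolyDeg l g) :
    PolyDeg (k + l) (fun x => f x * g x) := by
  obtain ⟨p, hp, h⟩ := hf
  obtain ⟨q, hq, h'⟩ := hg
  exact ⟨p * q, (MvPolynomial.totalDegree_mul p q).trans (add_le_add hp hq),
    fun x => by simp [h, h']⟩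

theorem PolyDeg.one (k : ℕ) : PolyDeg k (fun _ => 1) := ⟨1, by simp, fun x => by simp⟩

theorem PolyDeg.coord (i : Fin 3) : PolyDeg 1 (fun x => x i) :=
  ⟨MvPolynomial.X i, by simp, fun x => by simp⟩

theorem hasFDerivAt_mv (p : MvPolynomial (Fin 3) ℝ) (x : Vec) :
    ∃ L : Vec →L[ℝ] ℝ, HasFDerivAt (fun y : Vec => MvPolynomial.eval y p) L x ∧
      ∀ i, L (Pi.single i 1) = MvPolynomial.eval x (MvPolynomial.pderiv i p) := by
  induction p using MvPolynomial.induction_on with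
  | C a =>
    refine ⟨0, by simpa using hasFDerivAt_const a x, fun i => by simp⟩
  | add p q hp hq =>
    obtain ⟨L, h, h'⟩ := hp
    obtain ⟨M, g, g'⟩ := hq
    refine ⟨L + M, by simpa using h.fun_add g, fun i => by simp [h', g']⟩
  | mul_X p j hp =>
    obtain ⟨L, h, h'⟩ := hp
    refine ⟨_, by simpa using h.fun_mul (hasFDerivAt_apply j x), fun i => ?_⟩
    rcases eq_or_ne i j with rfl | hij
    · simp [h']
    · simp [h', MvPolynomial.pderiv_X_of_ne hij.symm, hij.symm]

theorem PolyDeg.differentiable {k : ℕ} {f} (hf : PolyDeg k f) : Differentiable ℝ f := by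
  obtain ⟨p, hp, h⟩ := hf
  intro x
  obtain ⟨L, h1, _⟩ := hasFDerivAt_mv p x
  rw [show f = fun y => MvPolynomial.eval y p from funext h]
  exact h1.differentiableAt

theorem PolyDeg.pd {k : ℕ} {f} (hf : PolyDeg (k + 1) f) (i : Fin 3) : PolyDeg k (pd i f) := by
  obtain ⟨p, hp, h⟩ := hf
  refine ⟨MvPolynomial.pderiv i p, ?_, fun x => ?_⟩
  · rw [MvPolynomial.as_sum p, map_sum]
    refine MvPolynomial.totalDegree_finsetSum_le fun d hd => ?_
    rw [MvPolynomial.pderiv_monomial]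
    rcases Nat.eq_zero_or_pos (d i) with h0 | h0
    · simp [h0]
    · refine (MvPolynomial.totalDegree_monomial_le _ _).trans ?_
      have h1 := (MvPolynomial.le_totalDegree hd).trans hp
      rw [Finsupp.sum_fintype _ _ (fun _ => rfl), Fin.sum_univ_three] at h1
      rw [Finsupp.sum_fintype _ _ (fun _ => rfl), Fin.sum_univ_three]
      simp only [Finsupp.coe_tsub, Pi.sub_apply]
      have h2 : ∀ j, Finsupp.single i 1 j = if i = j then 1 else 0 := fun j => by
        simp [Finsupp.single_apply]
      simp only [h2]
      fin_cases i <;> simp at h0 ⊢ <;> omega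
  · obtain ⟨L, h1, h2⟩ := hasFDerivAt_mv p x
    unfold _root_.pd
    rw [show f = fun y => MvPolynomial.eval y p from funext h, h1.fderiv, h2]

theorem PolyDeg.eq_sum {k : ℕ} {f} (hf : PolyDeg k f) : ∃ (s : Finset (Fin 3 →₀ ℕ)) (c : (Fin 3 →₀ ℕ) → ℝ),
    (∀ d ∈ s, d 0 + d 1 + d 2 ≤ k) ∧ ∀ x, f x = ∑ d ∈ s, c d * (x 0 ^ d 0 * x 1 ^ d 1 * x 2 ^ d 2) := by
  obtain ⟨p, hp, h⟩ := hf
  refine ⟨p.support, fun d => p.coeff d, fun d hd => ?_, fun x => ?_⟩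
  · have := (MvPolynomial.le_totalDegree hd).trans hp
    rw [Finsupp.sum_fintype _ _ (fun _ => rfl), Fin.sum_univ_three] at this
    exact this
  · rw [h, MvPolynomial.eval_eq']
    simp [Fin.prod_univ_three, mul_assoc]

/-- Affine combinations pass through degree one polynomials. -/
theorem PolyDeg.affine {f} (hf : PolyDeg 1 f) (x y z u : Vec) (a b c d : ℝ)
    (h : a + b + c + d = 1) :
    f (a • x + b • y + c • z + d • u) = a * f x + b * f y + c * f z + d * f u := by
  obtain ⟨s, co, hs, hf⟩ := hf.eq_sum
  simp only [hf, Finset.mul_sum, ← Finset.sum_add_distrib]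
  refine Finset.sum_congr rfl fun m hm => ?_
  have hm := hs m hm
  obtain rfl : d = 1 - a - b - c := by linarith
  generalize m 0 = m0 at hm ⊢
  generalize m 1 = m1 at hm ⊢
  generalize m 2 = m2 at hm ⊢
  have h0 : m0 ≤ 1 := by omega
  have h1 : m1 ≤ 1 := by omega
  have h2 : m2 ≤ 1 := by omega
  interval_cases m0 <;> interval_cases m1 <;> interval_cases m2 <;>
    first | (exfalso; omega) | (simp; try ring)

/-- polarization of a quadratic function -/
def bl (f : Vec → ℝ) (x y : Vec) : ℝ :=
  2 * f ((1 / 2 : ℝ) • x + (1 / 2 : ℝ) • y) - f x / 2 - f y / 2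

theorem PolyDeg.quad {f} (hf : PolyDeg 2 f) (x y z u : Vec) (a b c d : ℝ)
    (h : a + b + c + d = 1) :
    f (a • x + b • y + c • z + d • u) = a ^ 2 * f x + b ^ 2 * f y + c ^ 2 * f z + d ^ 2 * f u
      + 2 * (a * b * bl f x y + a * c * bl f x z + a * d * bl f x u + b * c * bl f y z
        + b * d * bl f y u + c * d * bl f z u) := by
  obtain ⟨s, co, hs, hf⟩ := hf.eq_sum
  unfold bl
  simp only [hf, Finset.mul_sum, Finset.sum_div, ← Finset.sum_add_distrib, ← Finset.sum_sub_distrib]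
  refine Finset.sum_congr rfl fun m hm => ?_
  have hm := hs m hm
  obtain rfl : d = 1 - a - b - c := by linarith
  generalize m 0 = m0 at hm ⊢
  generalize m 1 = m1 at hm ⊢
  generalize m 2 = m2 at hm ⊢
  have h0 : m0 ≤ 2 := by omega
  have h1 : m1 ≤ 2 := by omega
  have h2 : m2 ≤ 2 := by omega
  generalize co m = cm
  simp only [Pi.add_apply, Pi.smul_apply, smul_eq_mul]
  interval_cases m0 <;> interval_cases m1 <;> interval_cases m2 <;>
    first | (exfalso; omega) | (simp only [pow_zero, pow_one, mul_one, one_mul]; ring)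

theorem dot3_eq (v w : Vec) : dot3 v w = v 0 * w 0 + v 1 * w 1 + v 2 * w 2 := by
  simp [dot3, Fin.sum_univ_three]

theorem dot3_self_pos {v : Vec} (h : v ≠ 0) : 0 < dot3 v v := by
  rw [dot3_eq]
  by_contra hc
  apply h
  have h0 : v 0 = 0 := by nlinarith [sq_nonneg (v 0), sq_nonneg (v 1), sq_nonneg (v 2)]
  have h1 : v 1 = 0 := by nlinarith [sq_nonneg (v 0), sq_nonneg (v 1), sq_nonneg (v 2)]
  have h2 : v 2 = 0 := by nlinarith [sq_nonneg (v 0), sq_nonneg (v 1), sq_nonneg (v 2)]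
  ext i; fin_cases i <;> simp [h0, h1, h2]

theorem PolyDeg.grad {f} (hf : PolyDeg 1 f) : ∃ (g : Vec) (c : ℝ), ∀ x, f x = c + dot3 g x := by
  refine ⟨fun i => f (Pi.single i 1) - f 0, f 0, fun x => ?_⟩
  have := hf.affine (Pi.single 0 1) (Pi.single 1 1) (Pi.single 2 1) 0 (x 0) (x 1) (x 2)
    (1 - x 0 - x 1 - x 2) (by ring)
  rw [show x 0 • (Pi.single 0 1 : Vec) + x 1 • (Pi.single 1 1 : Vec) + x 2 • (Pi.single 2 1 : Vec)
    + (1 - x 0 - x 1 - x 2) • (0 : Vec) = x by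
      ext i; fin_cases i <;> simp] at this
  rw [this, dot3_eq]; ring

/-- four distinct indices -/
def D4 (i j k a : Fin 4) : Prop := i ≠ j ∧ i ≠ k ∧ i ≠ a ∧ j ≠ k ∧ j ≠ a ∧ k ≠ a

theorem D4.univ {i j k a : Fin 4} (h : D4 i j k a) : (Finset.univ : Finset (Fin 4)) = {i, j, k, a} := by
  obtain ⟨h1, h2, h3, h4, h5, h6⟩ := h
  symm
  apply Finset.eq_univ_of_card
  rw [Finset.card_insert_of_notMem (by simp [*]), Finset.card_insert_of_notMem (by simp [*]),
    Finset.card_insert_of_notMem (by simp [*])]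
  simp

theorem D4.sum {M : Type} [AddCommMonoid M] {i j k a : Fin 4} (h : D4 i j k a) (f : Fin 4 → M) :
    ∑ m, f m = f i + f j + f k + f a := by
  rw [h.univ]
  obtain ⟨h1, h2, h3, h4, h5, h6⟩ := h
  rw [Finset.sum_insert (by simp [*]), Finset.sum_insert (by simp [*]),
    Finset.sum_insert (by simp [*]), Finset.sum_singleton]
  simp only [add_assoc]

theorem D4.prod {i j k a : Fin 4} (h : D4 i j k a) (f : Fin 4 → ℝ) :
    ∏ m, f m = f i * f j * f k * f a := by
  rw [h.univ]
  obtain ⟨h1, h2, h3, h4, h5, h6⟩ := h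
  rw [Finset.prod_insert (by simp [*]), Finset.prod_insert (by simp [*]),
    Finset.prod_insert (by simp [*]), Finset.prod_singleton]
  simp only [mul_assoc]

theorem D4.cases {i j k a : Fin 4} (h : D4 i j k a) (m : Fin 4) : m = i ∨ m = j ∨ m = k ∨ m = a := by
  have := Finset.mem_univ m
  rw [h.univ] at this
  simpa using this

theorem D4.ex2 {i j : Fin 4} (h : i ≠ j) : ∃ k a, D4 i j k a := by
  unfold D4; revert i j; decide

theorem D4.ex3 {i j k : Fin 4} (h : i ≠ j ∧ i ≠ k ∧ j ≠ k) : ∃ a, D4 i j k a := by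
  unfold D4; revert i j k; decide

theorem Tetra.IsBary.decomp {T : Tetra} {lam} (h : T.IsBary lam) (x : Vec) :
    ∑ m, lam m x = 1 ∧ x = ∑ m, lam m x • T.vtx m := by
  have htop : affineSpan ℝ (Set.range T.vtx) = ⊤ := by
    rw [T.indep.affineSpan_eq_top_iff_card_eq_finrank_add_one]; simp
  let B : AffineBasis (Fin 4) ℝ Vec := ⟨T.vtx, T.indep, htop⟩
  have h1 := B.linear_combination_coord_eq_self x
  have h2 := B.sum_coord_apply_eq_one x
  have hl : ∀ m, lam m x = B.coord m x := by
    intro m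
    have := (h.1 m).affine (T.vtx 0) (T.vtx 1) (T.vtx 2) (T.vtx 3) (B.coord 0 x) (B.coord 1 x)
      (B.coord 2 x) (B.coord 3 x) (by rw [← h2, Fin.sum_univ_four])
    rw [Fin.sum_univ_four] at h1
    rw [show B.coord 0 x • T.vtx 0 + B.coord 1 x • T.vtx 1 + B.coord 2 x • T.vtx 2
      + B.coord 3 x • T.vtx 3 = x from h1] at this
    rw [this]
    simp only [h.2]
    fin_cases m <;> simp
  simp only [hl]
  exact ⟨h2, h1.symm⟩

theorem perp {T : Tetra} {lam} (h : T.IsBary lam) (i : Fin 4) (u : Vec)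
    (hu : ∀ j, dot3 u (T.vtx j - T.vtx i) = 0) : u = 0 := by
  by_contra hne
  have hp := dot3_self_pos hne
  obtain ⟨h1, h2⟩ := h.decomp (T.vtx i + u)
  rw [Fin.sum_univ_four] at h1 h2
  have e : ∀ c, T.vtx i c + u c = _ := fun c => congrFun h2 c
  simp only [Pi.add_apply, Pi.smul_apply, smul_eq_mul] at e
  have a0 := hu 0
  have a1 := hu 1
  have a2 := hu 2
  have a3 := hu 3
  rw [dot3_eq] at *
  simp only [Pi.sub_apply] at *
  generalize lam 0 (T.vtx i + u) = l0 at *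
  generalize lam 1 (T.vtx i + u) = l1 at *
  generalize lam 2 (T.vtx i + u) = l2 at *
  generalize lam 3 (T.vtx i + u) = l3 at *
  have : u 0 * u 0 + u 1 * u 1 + u 2 * u 2 = 0 := by
    linear_combination l0 * a0 + l1 * a1 + l2 * a2 + l3 * a3 + u 0 * e 0 + u 1 * e 1 + u 2 * e 2
      + (u 0 * T.vtx i 0 + u 1 * T.vtx i 1 + u 2 * T.vtx i 2) * h1
  linarith

/-- gradients of the barycentric coordinates -/
theorem exists_grads {T : Tetra} {lam} (h : T.IsBary lam) : ∃ g : Fin 4 → Vec,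
    (∀ m x y, lam m x - lam m y = dot3 (g m) (x - y)) := by
  choose g c hg using fun m => (h.1 m).grad
  refine ⟨g, fun m x y => ?_⟩
  rw [hg, hg]; simp only [dot3_eq, Pi.sub_apply]; ring

theorem cross_ne {T : Tetra} {lam} (h : T.IsBary lam) {i j k : Fin 4}
    (hd : i ≠ j ∧ i ≠ k ∧ j ≠ k) : cross3 (T.vtx j - T.vtx i) (T.vtx k - T.vtx i) ≠ 0 := by
  obtain ⟨g, hg⟩ := exists_grads h
  obtain ⟨h1, h2, h3⟩ := hd
  have a1 := hg j (T.vtx j) (T.vtx i)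
  have a2 := hg j (T.vtx k) (T.vtx i)
  have a3 := hg k (T.vtx j) (T.vtx i)
  have a4 := hg k (T.vtx k) (T.vtx i)
  simp only [h.2, h3, h1.symm, h2.symm, h3.symm, if_true, if_false] at a1 a2 a3 a4
  rw [dot3_eq] at a1 a2 a3 a4
  intro h0
  have e0 := congrFun h0 0
  have e1 := congrFun h0 1
  have e2 := congrFun h0 2
  simp [cross3] at e0 e1 e2
  simp only [Pi.sub_apply] at *
  have : (1:ℝ) = 0 := by
    generalize g j = G at *
    generalize g k = H at *
    generalize T.vtx i = X at *
    generalize T.vtx j = Y at *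
    generalize T.vtx k = Z at *
    linear_combination a1 + (G 0 * (Y 0 - X 0) + G 1 * (Y 1 - X 1) + G 2 * (Y 2 - X 2)) * a4
      - (G 0 * (Z 0 - X 0) + G 1 * (Z 1 - X 1) + G 2 * (Z 2 - X 2)) * a3
      + (G 1 * H 2 - G 2 * H 1) * e0 + (G 2 * H 0 - G 0 * H 2) * e1 + (G 0 * H 1 - G 1 * H 0) * e2
  exact one_ne_zero this

theorem linind {T : Tetra} {lam} (h : T.IsBary lam) {i j k : Fin 4}
    (hd : i ≠ j ∧ i ≠ k ∧ j ≠ k) :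
    LinearIndependent ℝ ![T.vtx j - T.vtx i, T.vtx k - T.vtx i] := by
  obtain ⟨g, hg⟩ := exists_grads h
  obtain ⟨h1, h2, h3⟩ := hd
  have a1 := hg j (T.vtx j) (T.vtx i)
  have a2 := hg j (T.vtx k) (T.vtx i)
  have a3 := hg k (T.vtx j) (T.vtx i)
  have a4 := hg k (T.vtx k) (T.vtx i)
  simp only [h.2, h3, h1.symm, h2.symm, h3.symm, if_true, if_false] at a1 a2 a3 a4
  rw [dot3_eq] at a1 a2 a3 a4
  rw [LinearIndependent.pair_iff]
  intro s t hst
  have e0 := congrFun hst 0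
  have e1 := congrFun hst 1
  have e2 := congrFun hst 2
  simp only [Pi.sub_apply, Pi.add_apply, Pi.smul_apply, Pi.zero_apply, smul_eq_mul] at *
  constructor
  · linear_combination s * a1 + t * a2 + g j 0 * e0 + g j 1 * e1 + g j 2 * e2
  · linear_combination s * a3 + t * a4 + g k 0 * e0 + g k 1 * e1 + g k 2 * e2

theorem normal_unit {T : Tetra} {lam} (h : T.IsBary lam) (a : Fin 4) :
    dot3 (T.outNormal a) (T.outNormal a) = 1 := by
  have hne := cross_ne h (i := a.succAbove 0) (j := a.succAbove 1) (k := a.succAbove 2)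
    ⟨by simp, by simp, by simp⟩
  unfold Tetra.outNormal
  simp only
  generalize cross3 _ _ = u at *
  have hp := dot3_self_pos hne
  have hs : Real.sqrt (dot3 u u) ^ 2 = dot3 u u := Real.sq_sqrt hp.le
  have hs0 : Real.sqrt (dot3 u u) ≠ 0 := (Real.sqrt_pos.2 hp).ne'
  have : dot3 (normalize3 u) (normalize3 u) = 1 := by
    have : dot3 (normalize3 u) (normalize3 u) = (Real.sqrt (dot3 u u))⁻¹ ^ 2 * dot3 u u := by
      unfold normalize3 enorm3
      generalize (Real.sqrt (dot3 u u))⁻¹ = c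
      simp only [dot3_eq, Pi.smul_apply, smul_eq_mul]; ring
    rw [this]
    field_simp
    exact hs.symm
  split_ifs
  · refine Eq.trans ?_ this
    simp only [dot3_eq, Pi.smul_apply, smul_eq_mul]; ring
  · rw [one_smul, this]

theorem normal_perp0 {T : Tetra} (a : Fin 4) (m : Fin 3) :
    dot3 (T.outNormal a) (T.vtx (a.succAbove m) - T.vtx (a.succAbove 0)) = 0 := by
  unfold Tetra.outNormal normalize3
  simp only
  generalize (enorm3 _)⁻¹ = d
  split_ifs <;> simp only [dot3_eq, Pi.smul_apply, smul_eq_mul, cross3] <;>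
    fin_cases m <;> simp <;> ring

theorem normal_perp {T : Tetra} {a i j : Fin 4} (hi : i ≠ a) (hj : j ≠ a) :
    dot3 (T.outNormal a) (T.vtx j - T.vtx i) = 0 := by
  obtain ⟨m, rfl⟩ := Fin.exists_succAbove_eq hi
  obtain ⟨l, rfl⟩ := Fin.exists_succAbove_eq hj
  have h1 := normal_perp0 (T := T) a m
  have h2 := normal_perp0 (T := T) a l
  simp only [dot3_eq, Pi.sub_apply] at *
  linarith

theorem face_eq {T : Tetra} {i j k a : Fin 4} (h : D4 i j k a) :
    T.face a = convexHull ℝ {T.vtx i, T.vtx j, T.vtx k} := by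
  unfold Tetra.face
  congr 1
  have : {j | j ≠ a} = ({i, j, k} : Set (Fin 4)) := by
    ext m
    simp only [Set.mem_ofPred_eq, Set.mem_insert_iff, Set.mem_singleton_iff]
    have := h.cases m
    obtain ⟨h1, h2, h3, h4, h5, h6⟩ := h
    constructor
    · tauto
    · rintro (rfl | rfl | rfl) <;> assumption
  rw [this]
  simp [Set.image_insert_eq]

/-- point of a face -/
def fpt (x y z : Vec) (p : ℝ × ℝ) : Vec := (1 - p.1 - p.2) • x + p.1 • y + p.2 • z + (0:ℝ) • (0 : Vec)

theorem face_int {T : Tetra} {lam} (h : T.IsBary lam) {i j k a : Fin 4} (hd : D4 i j k a)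
    (g : Vec → ℝ) (h0 : ∫ x in T.face a, g x ∂μH[2] = 0) :
    ∫ p in tri, g (fpt (T.vtx i) (T.vtx j) (T.vtx k) p) = 0 := by
  rw [face_eq hd] at h0
  obtain ⟨c, hc, hh⟩ := face_image (T.vtx i) (T.vtx j) (T.vtx k)
    (linind h ⟨hd.1, hd.2.1, hd.2.2.2.1⟩)
  rw [hh] at h0
  rw [← (mul_eq_zero.1 h0).resolve_left hc]
  congr 1
  ext p
  congr 1
  ext c
  simp [fpt]; ring

theorem lam_fpt {T : Tetra} {lam} (h : T.IsBary lam) {i j k a : Fin 4} (hd : D4 i j k a)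
    (p : ℝ × ℝ) : lam a (fpt (T.vtx i) (T.vtx j) (T.vtx k) p) = 0 ∧
      lam i (fpt (T.vtx i) (T.vtx j) (T.vtx k) p) = 1 - p.1 - p.2 ∧
      lam j (fpt (T.vtx i) (T.vtx j) (T.vtx k) p) = p.1 ∧
      lam k (fpt (T.vtx i) (T.vtx j) (T.vtx k) p) = p.2 := by
  obtain ⟨h1, h2, h3, h4, h5, h6⟩ := hd
  unfold fpt
  refine ⟨?_, ?_, ?_, ?_⟩ <;>
  · rw [(h.1 _).affine _ _ _ _ _ _ _ _ (by ring)]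
    simp [h.2, *, Ne.symm]

/-- vector polarization -/
def BV (w : Vec → Vec) (x y : Vec) : Vec := fun c => bl (fun t => w t c) x y

theorem BV_symm (w : Vec → Vec) (x y : Vec) : BV w x y = BV w y x := by
  ext c; simp only [BV, bl]; rw [add_comm ((1 / 2 : ℝ) • x)]; ring

theorem edge_step {k m : ℕ} {T : Tetra} {lam} (h : T.IsBary lam) {v w : Vec → Vec}
    (hw : VPolyDeg 2 w) (hvw : ∀ a x, lam a x = 0 → v x = w x) {i j : Fin 4} (hij : i ≠ j)
    (hedge : ∀ q, PolyDeg k q → edgeMoment T i j v q = 0) (q : Vec → ℝ) (hq : PolyDeg k q)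
    (hqs : ∀ s : ℝ, q (T.vtx i + s • (T.vtx j - T.vtx i)) = s ^ m) :
    2 * dot3 (w (T.vtx i)) (T.vtx j - T.vtx i)
      + 2 * (m + 1) * dot3 (BV w (T.vtx i) (T.vtx j)) (T.vtx j - T.vtx i)
      + (m + 1) * (m + 2) * dot3 (w (T.vtx j)) (T.vtx j - T.vtx i) = 0 := by
  have hne : T.vtx i ≠ T.vtx j := fun e => by
    have h1 := h.2 i i
    have h2 := h.2 i j
    rw [e, h2] at h1; simp [hij] at h1
  obtain ⟨c, hc, hh⟩ := edge_image (T.vtx i) (T.vtx j) hne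
  have h0 := hedge q hq
  unfold edgeMoment Tetra.edge at h0
  rw [hh] at h0
  replace h0 := (mul_eq_zero.1 h0).resolve_left hc
  obtain ⟨e, a, hd⟩ := D4.ex2 hij
  have hla : ∀ s : ℝ, lam a (T.vtx i + s • (T.vtx j - T.vtx i)) = 0 := by
    intro s
    have := (h.1 a).affine (T.vtx i) (T.vtx j) 0 0 (1 - s) s 0 0 (by ring)
    rw [show (1 - s) • T.vtx i + s • T.vtx j + (0:ℝ) • (0 : Vec) + (0:ℝ) • (0 : Vec) =
      T.vtx i + s • (T.vtx j - T.vtx i) by ext c; simp; ring] at this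
    rw [this, h.2, h.2, if_neg hd.2.2.1.symm, if_neg hd.2.2.2.2.1.symm]; simp
  have hw2 : ∀ (s : ℝ) c, w (T.vtx i + s • (T.vtx j - T.vtx i)) c = (1 - s) ^ 2 * w (T.vtx i) c
      + s ^ 2 * w (T.vtx j) c + 2 * ((1 - s) * s * BV w (T.vtx i) (T.vtx j) c) := by
    intro s c
    have := (hw c).quad (T.vtx i) (T.vtx j) 0 0 (1 - s) s 0 0 (by ring)
    rw [show (1 - s) • T.vtx i + s • T.vtx j + (0:ℝ) • (0 : Vec) + (0:ℝ) • (0 : Vec) =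
      T.vtx i + s • (T.vtx j - T.vtx i) by ext c; simp; ring] at this
    rw [this]; simp only [BV]; ring
  have hE : enorm3 (T.vtx j - T.vtx i) ≠ 0 :=
    (Real.sqrt_pos.2 (dot3_self_pos (sub_ne_zero.2 hne.symm))).ne'
  set A := dot3 (w (T.vtx i)) (T.vtx j - T.vtx i) with hA
  set B := dot3 (BV w (T.vtx i) (T.vtx j)) (T.vtx j - T.vtx i) with hB
  set C := dot3 (w (T.vtx j)) (T.vtx j - T.vtx i) with hC
  have hint : ∀ s : ℝ, dot3 (v (T.vtx i + s • (T.vtx j - T.vtx i))) (T.tangent i j) *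
      q (T.vtx i + s • (T.vtx j - T.vtx i)) = (enorm3 (T.vtx j - T.vtx i))⁻¹ *
        (A * ((1 - s) ^ 2 * s ^ m) + (2 * B * ((1 - s) ^ 1 * s ^ (m + 1))
          + C * ((1 - s) ^ 0 * s ^ (m + 2)))) := by
    intro s
    rw [hvw a _ (hla s), hqs, hA, hB, hC]
    unfold Tetra.tangent normalize3
    generalize (enorm3 _)⁻¹ = d
    simp only [dot3_eq, hw2, Pi.smul_apply, smul_eq_mul]
    ring
  simp only [hint] at h0
  rw [intervalIntegral.integral_const_mul] at h0
  replace h0 := (mul_eq_zero.1 h0).resolve_left (inv_ne_zero hE)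
  rw [intervalIntegral.integral_add, intervalIntegral.integral_add,
    intervalIntegral.integral_const_mul, intervalIntegral.integral_const_mul,
    intervalIntegral.integral_const_mul, beta_int, beta_int, beta_int] at h0
  rotate_left
  iterate 4 exact Continuous.intervalIntegrable (by fun_prop) _ _
  have e1 : 2 + m + 1 = m + 3 := by ring
  have e2 : 1 + (m + 1) + 1 = m + 3 := by ring
  have e3 : 0 + (m + 2) + 1 = m + 3 := by ring
  rw [e1, e2, e3] at h0
  simp only [Nat.factorial_succ, one_pow, mul_one, Nat.factorial_zero] at h0
  push_cast at h0
  have hf : (m.factorial : ℝ) ≠ 0 := by exact_mod_cast m.factorial_ne_zero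
  have h3 : (m:ℝ) + 3 ≠ 0 := by positivity
  have h2 : (m:ℝ) + 2 ≠ 0 := by positivity
  have h1 : (m:ℝ) + 1 ≠ 0 := by positivity
  field_simp at h0
  ring_nf at h0 ⊢
  linarith

theorem cross_id (v n y : Vec) :
    dot3 (cross3 v n) (cross3 n y) = dot3 v n * dot3 n y - dot3 v y * dot3 n n := by
  simp [dot3_eq, cross3]; ring

theorem face_mom {k : ℕ} {T : Tetra} {lam} (h : T.IsBary lam) {v w : Vec → Vec}
    (hvw : ∀ a x, lam a x = 0 → v x = w x) {i j l a : Fin 4} (hd : D4 i j l a)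
    (hf : ∀ q, MemRM k (T.outNormal a) q → faceTanMoment T a v q = 0) (y : Vec → Vec)
    (hq : MemRM k (T.outNormal a) (fun x => cross3 (T.outNormal a) (y x)))
    (hy : ∀ p, dot3 (T.outNormal a) (y (fpt (T.vtx i) (T.vtx j) (T.vtx l) p)) = 0) :
    ∫ p in tri, dot3 (w (fpt (T.vtx i) (T.vtx j) (T.vtx l) p))
      (y (fpt (T.vtx i) (T.vtx j) (T.vtx l) p)) = 0 := by
  have h0 := face_int h hd _ (hf _ hq)
  rw [← neg_eq_zero, ← integral_neg, ← h0]
  congr 1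
  ext p
  rw [cross_id, hy, normal_unit h, hvw a _ (lam_fpt h hd p).1]
  ring

theorem w_fpt {w : Vec → Vec} (hw : VPolyDeg 2 w) {x y z : Vec} (hx : w x = 0) (hy : w y = 0)
    (hz : w z = 0) (p : ℝ × ℝ) (c : Fin 3) : w (fpt x y z p) c =
      2 * ((1 - p.1 - p.2) * p.1 * BV w x y c + (1 - p.1 - p.2) * p.2 * BV w x z c
        + p.1 * p.2 * BV w y z c) := by
  unfold fpt
  rw [(hw c).quad _ _ _ _ _ _ _ _ (by ring), hx, hy, hz]
  simp only [BV, Pi.zero_apply]; ring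

theorem face_const {k : ℕ} {T : Tetra} {lam} (h : T.IsBary lam) {v w : Vec → Vec}
    (hw : VPolyDeg 2 w)
    (hvw : ∀ a x, lam a x = 0 → v x = w x) {i j l a : Fin 4} (hd : D4 i j l a)
    (hf : ∀ q, MemRM k (T.outNormal a) q → faceTanMoment T a v q = 0)
    (hw0 : ∀ m, w (T.vtx m) = 0) (t : Vec) (ht : dot3 (T.outNormal a) t = 0) :
    dot3 (BV w (T.vtx i) (T.vtx j)) t + dot3 (BV w (T.vtx i) (T.vtx l)) t
      + dot3 (BV w (T.vtx j) (T.vtx l)) t = 0 := by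
  have h0 := face_mom h hvw hd hf (fun _ => t)
    ⟨cross3 (T.outNormal a) t, 0, by simp [dot3_eq, cross3]; ring, fun _ => rfl, fun x => by simp⟩
    (fun _ => ht)
  have := bint_sum ![2 * dot3 (BV w (T.vtx i) (T.vtx j)) t, 2 * dot3 (BV w (T.vtx i) (T.vtx l)) t,
    2 * dot3 (BV w (T.vtx j) (T.vtx l)) t] ![(1,1,0), (1,0,1), (0,1,1)]
  rw [show ∫ p in tri, _ = (0:ℝ) from (Eq.trans (by
    congr 1; ext p
    simp only [dot3_eq, w_fpt hw (hw0 i) (hw0 j) (hw0 l)]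
    simp [Fin.sum_univ_three, bmon]; ring) h0)] at this
  simp [Fin.sum_univ_three, Nat.factorial] at this
  linarith

theorem face_x {T : Tetra} {lam} (h : T.IsBary lam) {v w : Vec → Vec}
    (hw : VPolyDeg 2 w)
    (hvw : ∀ a x, lam a x = 0 → v x = w x) {i j l a : Fin 4} (hd : D4 i j l a)
    (hf : ∀ q, MemRM 2 (T.outNormal a) q → faceTanMoment T a v q = 0)
    (hw0 : ∀ m, w (T.vtx m) = 0)
    (h1 : dot3 (BV w (T.vtx i) (T.vtx j)) (T.vtx j - T.vtx i) = 0)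
    (h2 : dot3 (BV w (T.vtx i) (T.vtx l)) (T.vtx l - T.vtx i) = 0) :
    dot3 (BV w (T.vtx i) (T.vtx j)) (T.vtx l - T.vtx i)
      + dot3 (BV w (T.vtx i) (T.vtx l)) (T.vtx j - T.vtx i)
      + 2 * dot3 (BV w (T.vtx j) (T.vtx l)) (T.vtx j - T.vtx i)
      + 2 * dot3 (BV w (T.vtx j) (T.vtx l)) (T.vtx l - T.vtx i) = 0 := by
  have n1 := normal_perp (T := T) hd.2.2.1 hd.2.2.2.2.1
  have n2 := normal_perp (T := T) hd.2.2.1 hd.2.2.2.2.2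
  have hx : ∀ p c, (fpt (T.vtx i) (T.vtx j) (T.vtx l) p - T.vtx i) c = p.1 * (T.vtx j - T.vtx i) c
      + p.2 * (T.vtx l - T.vtx i) c := by
    intro p c; simp [fpt]; ring
  have h0 := face_mom h hvw hd hf (fun x => x - T.vtx i)
    ⟨- cross3 (T.outNormal a) (T.vtx i), 1, by simp [dot3_eq, cross3]; ring, fun h => by omega,
      fun x => by ext c; fin_cases c <;> simp [cross3] <;> ring⟩
    (fun p => by
      simp only [dot3_eq, hx] at *
      linear_combination p.1 * n1 + p.2 * n2)
  set d2 := T.vtx j - T.vtx i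
  set d3 := T.vtx l - T.vtx i
  have := bint_sum ![2 * dot3 (BV w (T.vtx i) (T.vtx j)) d2, 2 * dot3 (BV w (T.vtx i) (T.vtx j)) d3,
    2 * dot3 (BV w (T.vtx i) (T.vtx l)) d2, 2 * dot3 (BV w (T.vtx i) (T.vtx l)) d3,
    2 * dot3 (BV w (T.vtx j) (T.vtx l)) d2, 2 * dot3 (BV w (T.vtx j) (T.vtx l)) d3]
    ![(1,2,0), (1,1,1), (1,1,1), (1,0,2), (0,2,1), (0,1,2)]
  rw [show ∫ p in tri, _ = (0:ℝ) from (Eq.trans (by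
    congr 1; ext p
    simp only [dot3_eq, hx, w_fpt hw (hw0 i) (hw0 j) (hw0 l)]
    simp [Fin.sum_univ_succ, bmon]; ring) h0)] at this
  simp [Fin.sum_univ_succ, Nat.factorial] at this
  linarith

theorem PolyDeg.mid {f} (hf : PolyDeg 1 f) (x y : Vec) :
    f ((1 / 2 : ℝ) • x + (1 / 2 : ℝ) • y) = (f x + f y) / 2 := by
  have := hf.affine x y 0 0 (1/2) (1/2) 0 0 (by norm_num)
  simp only [smul_zero, add_zero, zero_mul] at this
  rw [this]; ring

theorem w_poly {k : ℕ} (hk : k ≤ 2) {q : Vec → ℝ} {p : Vec → Vec} (hq : PolyDeg (k + 1) q)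
    (hp : VPolyDeg 1 p) : VPolyDeg 2 (fun x => grad3 q x + cross3 x (p x)) := by
  intro c
  have hg : PolyDeg 2 (fun x => grad3 q x c) := (hq.pd c).mono hk
  refine hg.add ?_
  have hm : ∀ a b : Fin 3, PolyDeg 2 (fun x => x a * p x b) := fun a b =>
    (PolyDeg.coord a).mul (hp b)
  fin_cases c
  · exact (hm 1 2).sub (hm 2 1)
  · exact (hm 2 0).sub (hm 0 2)
  · exact (hm 0 1).sub (hm 1 0)

theorem polar {q : Vec → ℝ} {p w : Vec → Vec} (hq : PolyDeg 2 q)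
    (hp : VPolyDeg 1 p) (hw : ∀ x, w x = grad3 q x + cross3 x (p x)) (x y z : Vec) :
    dot3 (w y) (z - x) - 2 * dot3 (BV w x y) (z - x) + dot3 (w x) (z - x)
      + 2 * (dot3 (BV w y z) (y - x) - dot3 (BV w x y) (y - x) - dot3 (BV w x z) (y - x)
        + dot3 (w x) (y - x)) = 0 := by
  have hg : ∀ (c : Fin 3) x y, grad3 q ((1 / 2 : ℝ) • x + (1 / 2 : ℝ) • y) c =
    (grad3 q x c + grad3 q y c) / 2 := fun c x y => (hq.pd c).mid x y
  have hp : ∀ (c : Fin 3) x y, p ((1 / 2 : ℝ) • x + (1 / 2 : ℝ) • y) c =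
    (p x c + p y c) / 2 := fun c x y => (hp c).mid x y
  have hb0 : ∀ x y, BV w x y 0 = (grad3 q x 0 + grad3 q y 0) / 2 +
      (x 1 * p y 2 - x 2 * p y 1 + y 1 * p x 2 - y 2 * p x 1) / 2 := by
    intro x y
    simp only [BV, bl, hw, Pi.add_apply, hg]
    simp only [cross3, hp]
    simp; ring
  have hb1 : ∀ x y, BV w x y 1 = (grad3 q x 1 + grad3 q y 1) / 2 +
      (x 2 * p y 0 - x 0 * p y 2 + y 2 * p x 0 - y 0 * p x 2) / 2 := by
    intro x y
    simp only [BV, bl, hw, Pi.add_apply, hg]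
    simp only [cross3, hp]
    simp; ring
  have hb2 : ∀ x y, BV w x y 2 = (grad3 q x 2 + grad3 q y 2) / 2 +
      (x 0 * p y 1 - x 1 * p y 0 + y 0 * p x 1 - y 1 * p x 0) / 2 := by
    intro x y
    simp only [BV, bl, hw, Pi.add_apply, hg]
    simp only [cross3, hp]
    simp; ring
  simp only [dot3_eq, hb0, hb1, hb2, hw, Pi.add_apply]
  simp [cross3]
  ring

theorem BV_self (w : Vec → Vec) (x : Vec) : BV w x x = w x := by
  ext c; simp only [BV, bl, ← add_smul]; norm_num; ring

theorem lam_edge {T : Tetra} {lam} (h : T.IsBary lam) {i j : Fin 4} (hij : i ≠ j) (s : ℝ) :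
    lam j (T.vtx i + s • (T.vtx j - T.vtx i)) = s := by
  have := (h.1 j).affine (T.vtx i) (T.vtx j) 0 0 (1 - s) s 0 0 (by ring)
  rw [show (1 - s) • T.vtx i + s • T.vtx j + (0:ℝ) • (0 : Vec) + (0:ℝ) • (0 : Vec) =
    T.vtx i + s • (T.vtx j - T.vtx i) by ext c; simp; ring] at this
  rw [this, h.2, h.2, if_neg hij.symm]; simp

theorem stepA {k : ℕ} (hk : k = 1 ∨ k = 2) {T : Tetra} {lam} (h : T.IsBary lam)
    {q : Vec → ℝ} {p v w : Vec → Vec} (hq : PolyDeg (k + 1) q) (hp : VPolyDeg 1 p)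
    (hw : ∀ x, w x = grad3 q x + cross3 x (p x))
    (hvw : ∀ a x, lam a x = 0 → v x = w x)
    (hedge : ∀ a b : Fin 4, a ≠ b → ∀ q, PolyDeg k q → edgeMoment T a b v q = 0)
    (hface : ∀ a : Fin 4, ∀ q, MemRM k (T.outNormal a) q → faceTanMoment T a v q = 0) (x : Vec) :
    w x = 0 := by
  have hw2 : VPolyDeg 2 w := by
    rw [show w = _ from funext hw]; exact w_poly (by omega) hq hp
  have hE : ∀ i j, i ≠ j → dot3 (w (T.vtx i)) (T.vtx j - T.vtx i) = 0 ∧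
      dot3 (BV w (T.vtx i) (T.vtx j)) (T.vtx j - T.vtx i) = 0 := by
    intro i j hij
    have e0 := edge_step (m := 0) h hw2 hvw hij (hedge i j hij) _ (PolyDeg.one k) (by simp)
    have e1 := edge_step (m := 1) h hw2 hvw hij (hedge i j hij) _ ((h.1 j).mono (by omega))
      (by simp [lam_edge h hij])
    rcases hk with rfl | rfl
    · have e2 := polar hq hp hw (T.vtx i) (T.vtx j) (T.vtx j)
      rw [BV_self] at e2
      norm_num at e0 e1
      constructor <;> linarith
    · have e2 := edge_step (m := 2) h hw2 hvw hij (hedge i j hij) _ ((h.1 j).mul (h.1 j))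
        (by intro s; rw [lam_edge h hij]; ring)
      norm_num at e0 e1 e2
      constructor <;> linarith
  have hw0 : ∀ i, w (T.vtx i) = 0 := by
    intro i
    refine perp h i _ fun j => ?_
    rcases eq_or_ne i j with rfl | hij
    · simp [dot3]
    · exact (hE i j hij).1
  have hF : ∀ i j l, i ≠ j ∧ i ≠ l ∧ j ≠ l →
      dot3 (BV w (T.vtx i) (T.vtx j)) (T.vtx l - T.vtx i) = 0 := by
    intro i j l hd3
    obtain ⟨a, hd⟩ := D4.ex3 hd3
    have c1 := face_const h hw2 hvw hd (hface a) hw0 _ (normal_perp hd.2.2.1 hd.2.2.2.2.1)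
    have c2 := face_const h hw2 hvw hd (hface a) hw0 _ (normal_perp hd.2.2.1 hd.2.2.2.2.2)
    have b1 := (hE i j hd3.1).2
    have b2 := (hE i l hd3.2.1).2
    have b3 := (hE j l hd3.2.2).2
    have b4 : dot3 (BV w (T.vtx j) (T.vtx l)) (T.vtx j - T.vtx i) =
        dot3 (BV w (T.vtx j) (T.vtx l)) (T.vtx l - T.vtx i) := by
      simp only [dot3_eq, Pi.sub_apply] at *
      linarith
    rcases hk with rfl | rfl
    · have := polar hq hp hw (T.vtx i) (T.vtx j) (T.vtx l)
      rw [hw0, hw0] at this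
      have z : ∀ u, dot3 0 u = 0 := fun u => by simp [dot3]
      rw [z, z] at this
      linarith
    · have := face_x h hw2 hvw hd (hface a) hw0 b1 b2
      linarith
  have hB : ∀ i j, BV w (T.vtx i) (T.vtx j) = 0 := by
    intro i j
    rcases eq_or_ne i j with rfl | hij
    · rw [BV_self, hw0]
    refine perp h i _ fun l => ?_
    rcases eq_or_ne i l with rfl | hil
    · simp [dot3]
    rcases eq_or_ne j l with rfl | hjl
    · exact (hE i j hij).2
    · exact hF i j l ⟨hij, hil, hjl⟩
  obtain ⟨s1, s2⟩ := h.decomp x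
  rw [Fin.sum_univ_four] at s1 s2
  ext c
  rw [s2, (hw2 c).quad _ _ _ _ _ _ _ _ s1]
  have hb : ∀ i j, bl (fun t => w t c) (T.vtx i) (T.vtx j) = 0 := fun i j => congrFun (hB i j) c
  simp [hb, hw0]

theorem pd_lam {f : Vec → ℝ} (hf : PolyDeg 1 f) {g : Vec}
    (hg : ∀ x y, f x - f y = dot3 g (x - y)) (c : Fin 3) (x : Vec) : pd c f x = g c := by
  unfold pd
  rw [← (hf.differentiable x).lineDeriv_eq_fderiv]
  unfold lineDeriv
  have : (fun t : ℝ => f (x + t • Pi.single c 1)) = fun t => f x + t * g c := by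
    ext t
    have := hg (x + t • Pi.single c 1) x
    rw [add_sub_cancel_left, dot3_eq] at this
    rw [← sub_eq_iff_eq_add', this]
    fin_cases c <;> simp <;> ring
  rw [this]
  simp

theorem pd_mul_zero {f m : Vec → ℝ} (hf : PolyDeg 1 f) {g : Vec}
    (hg : ∀ x y, f x - f y = dot3 g (x - y)) (hm : Differentiable ℝ m) (c : Fin 3) (x : Vec)
    (hx : f x = 0) : pd c (fun y => f y * m y) x = g c * m x := by
  rw [← pd_lam hf hg c x]
  unfold pd
  rw [fderiv_fun_mul (hf.differentiable x) (hm x), hx]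
  simp [mul_comm]

theorem curl_face {T : Tetra} {lam} (h : T.IsBary lam) {r v : Vec → Vec} (hr : VPolyDeg 1 r)
    (hv : ∀ x, v x = (∏ m, lam m x) • r x) {g : Fin 4 → Vec}
    (hg : ∀ m x y, lam m x - lam m y = dot3 (g m) (x - y)) {i j l a : Fin 4} (hd : D4 i j l a)
    (x : Vec) (hx : lam a x = 0) :
    curl3 v x = cross3 (g a) ((lam i x * lam j x * lam l x) • r x) := by
  have hp : ∀ c d, pd c (fun y => v y d) x = g a c * (lam i x * lam j x * lam l x * r x d) := by
    intro c d
    have : (fun y => v y d) = fun y => lam a y * (lam i y * lam j y * lam l y * r y d) := by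
      ext y; rw [hv, hd.prod]; simp; ring
    rw [this]
    refine pd_mul_zero (m := fun y => lam i y * lam j y * lam l y * r y d) (h.1 a) (hg a) ?_ c x hx
    exact (((h.1 i).mul (h.1 j)).mul (h.1 l)).mul (hr d) |>.differentiable
  unfold curl3 cross3
  simp only [hp]
  simp

theorem cross_id2 (g m n y : Vec) : dot3 (cross3 (cross3 g m) n) y =
    dot3 m y * dot3 g n - dot3 g y * dot3 m n := by
  simp [dot3_eq, cross3]; ring

theorem grad_normal {T : Tetra} {lam} (h : T.IsBary lam) {g : Fin 4 → Vec}
    (hg : ∀ m x y, lam m x - lam m y = dot3 (g m) (x - y)) (a : Fin 4) :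
    dot3 (g a) (T.outNormal a) ≠ 0 := by
  obtain ⟨i, hi⟩ : ∃ i : Fin 4, i ≠ a := exists_ne a
  set n := T.outNormal a with hn
  have h1 := hg a (T.vtx a) (T.vtx i)
  rw [h.2, h.2, if_pos rfl, if_neg hi.symm] at h1
  have hu : n - dot3 n (T.vtx a - T.vtx i) • g a = 0 := by
    refine perp h i _ fun m => ?_
    rcases eq_or_ne m a with rfl | hm
    · set s := dot3 n (T.vtx m - T.vtx i) with hs
      simp only [dot3_eq, Pi.sub_apply, Pi.smul_apply, smul_eq_mul] at *
      linear_combination -hs + s * h1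
    · have h2 := hg a (T.vtx m) (T.vtx i)
      rw [h.2, h.2, if_neg hm.symm, if_neg hi.symm] at h2
      have h3 := normal_perp (T := T) hi hm
      rw [← hn] at h3
      set s := dot3 n (T.vtx a - T.vtx i) with hs
      clear_value s
      simp only [dot3_eq, Pi.sub_apply, Pi.smul_apply, smul_eq_mul] at *
      linear_combination h3 + s * h2
  intro h0
  have hnn := normal_unit h a
  rw [← hn] at hnn
  have e := fun c => congrFun hu c
  generalize dot3 n (T.vtx a - T.vtx i) = s at *
  simp only [dot3_eq, Pi.sub_apply, Pi.smul_apply, smul_eq_mul, Pi.zero_apply] at *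
  have : (1:ℝ) = 0 := by
    linear_combination -hnn + s * h0 + n 0 * e 0 + n 1 * e 1 + n 2 * e 2
  exact one_ne_zero this

theorem face_momT {T : Tetra} {lam} (h : T.IsBary lam) {r v : Vec → Vec} (hr : VPolyDeg 1 r)
    (hv : ∀ x, v x = (∏ m, lam m x) • r x) {i j l a : Fin 4} (hd : D4 i j l a)
    (hf : ∀ q, MemRT (T.outNormal a) q → faceTanMoment T a (curl3 v) q = 0) (y : Vec → Vec)
    (hq : MemRT (T.outNormal a) y) (z : ℝ × ℝ → Vec)
    (hz : ∀ p, y (fpt (T.vtx i) (T.vtx j) (T.vtx l) p) = z p)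
    (hzt : ∀ p, ∃ s t : ℝ, z p = s • (T.vtx j - T.vtx i) + t • (T.vtx l - T.vtx i)) :
    ∫ p in tri, (1 - p.1 - p.2) * p.1 * p.2 *
      dot3 ((1 - p.1 - p.2) • r (T.vtx i) + p.1 • r (T.vtx j) + p.2 • r (T.vtx l)) (z p) = 0 := by
  obtain ⟨g, hg⟩ := exists_grads h
  have h0 := face_int h hd _ (hf _ hq)
  have hne := grad_normal h hg a
  rw [← mul_eq_zero_iff_left hne, ← integral_const_mul, ← h0]
  congr 1
  ext p
  obtain ⟨l1, l2, l3, l4⟩ := lam_fpt h hd p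
  rw [curl_face h hr hv hg hd _ l1, l2, l3, l4, cross_id2, hz]
  have hgz : dot3 (g a) (z p) = 0 := by
    obtain ⟨s, t, e⟩ := hzt p
    have h1 := hg a (T.vtx j) (T.vtx i)
    have h2 := hg a (T.vtx l) (T.vtx i)
    rw [h.2, h.2, if_neg hd.2.2.2.2.1.symm, if_neg hd.2.2.1.symm] at h1
    rw [h.2, h.2, if_neg hd.2.2.2.2.2.symm, if_neg hd.2.2.1.symm] at h2
    rw [e]
    simp only [dot3_eq, Pi.sub_apply, Pi.smul_apply, smul_eq_mul, Pi.add_apply] at *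
    linear_combination -s * h1 - t * h2
  rw [hgz]
  have hrp : ∀ c, r (fpt (T.vtx i) (T.vtx j) (T.vtx l) p) c =
      (1 - p.1 - p.2) * r (T.vtx i) c + p.1 * r (T.vtx j) c + p.2 * r (T.vtx l) c := by
    intro c
    unfold fpt
    rw [(hr c).affine _ _ _ _ _ _ _ _ (by ring)]; ring
  generalize dot3 (g a) (T.outNormal a) = e
  simp only [dot3_eq, Pi.smul_apply, smul_eq_mul, Pi.add_apply, hrp]
  ring

theorem faceT {T : Tetra} {lam} (h : T.IsBary lam) {r v : Vec → Vec} (hr : VPolyDeg 1 r)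
    (hv : ∀ x, v x = (∏ m, lam m x) • r x) {i j l a : Fin 4} (hd : D4 i j l a)
    (hf : ∀ q, MemRT (T.outNormal a) q → faceTanMoment T a (curl3 v) q = 0) :
    dot3 (r (T.vtx j)) (T.vtx j - T.vtx i) + dot3 (r (T.vtx l)) (T.vtx l - T.vtx i) = 0 := by
  have n1 := normal_perp (T := T) hd.2.2.1 hd.2.2.2.2.1
  have n2 := normal_perp (T := T) hd.2.2.1 hd.2.2.2.2.2
  have hc : ∀ t : Vec, dot3 (T.outNormal a) t = 0 →
      (∃ s' t' : ℝ, t = s' • (T.vtx j - T.vtx i) + t' • (T.vtx l - T.vtx i)) →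
      dot3 (r (T.vtx i)) t + dot3 (r (T.vtx j)) t + dot3 (r (T.vtx l)) t = 0 := by
    intro t ht hst
    have h0 := face_momT h hr hv hd hf (fun _ => t)
      ⟨t, 0, by simp only [dot3_eq] at *; linarith, fun x => by simp⟩ (fun _ => t)
      (fun _ => rfl) (fun _ => hst)
    have := bint_sum ![dot3 (r (T.vtx i)) t, dot3 (r (T.vtx j)) t, dot3 (r (T.vtx l)) t]
      ![(2,1,1), (1,2,1), (1,1,2)]
    rw [show ∫ p in tri, _ = (0:ℝ) from (Eq.trans (by
      congr 1; ext p
      simp only [dot3_eq]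
      simp [Fin.sum_univ_succ, bmon]; ring) h0)] at this
    simp [Fin.sum_univ_succ, Nat.factorial] at this
    linarith
  have c1 := hc _ n1 ⟨1, 0, by simp⟩
  have c2 := hc _ n2 ⟨0, 1, by simp⟩
  have h0 := face_momT h hr hv hd hf
    (fun x => -(T.vtx i - dot3 (T.vtx i) (T.outNormal a) • T.outNormal a) +
      (1:ℝ) • (x - dot3 x (T.outNormal a) • T.outNormal a))
    ⟨_, 1, by
      have hnn := normal_unit h a
      generalize T.outNormal a = n at *
      generalize hs : dot3 (T.vtx i) n = s at *
      simp only [dot3_eq, Pi.sub_apply, Pi.smul_apply, smul_eq_mul, Pi.neg_apply] at *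
      linear_combination -hs + s * hnn, fun x => rfl⟩
    (fun p => p.1 • (T.vtx j - T.vtx i) + p.2 • (T.vtx l - T.vtx i))
    (fun p => by
      have : dot3 (fpt (T.vtx i) (T.vtx j) (T.vtx l) p) (T.outNormal a) =
          dot3 (T.vtx i) (T.outNormal a) := by
        simp only [fpt, dot3_eq, Pi.sub_apply, Pi.smul_apply, smul_eq_mul, Pi.add_apply] at *
        simp only [Pi.zero_apply]
        linear_combination p.1 * n1 + p.2 * n2
      rw [this]
      ext c
      simp [fpt]; ring) (fun p => ⟨p.1, p.2, rfl⟩)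
  set d2 := T.vtx j - T.vtx i
  set d3 := T.vtx l - T.vtx i
  have := bint_sum ![dot3 (r (T.vtx i)) d2, dot3 (r (T.vtx i)) d3, dot3 (r (T.vtx j)) d2,
    dot3 (r (T.vtx j)) d3, dot3 (r (T.vtx l)) d2, dot3 (r (T.vtx l)) d3]
      ![(2,2,1), (2,1,2), (1,3,1), (1,2,2), (1,2,2), (1,1,3)]
  rw [show ∫ p in tri, _ = (0:ℝ) from (Eq.trans (by
    congr 1; ext p
    simp only [dot3_eq]
    simp [Fin.sum_univ_succ, bmon]; ring) h0)] at this
  simp [Fin.sum_univ_succ, Nat.factorial] at this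
  linarith

theorem stepB {T : Tetra} {lam} (h : T.IsBary lam) {r v : Vec → Vec} (hr : VPolyDeg 1 r)
    (hv : ∀ x, v x = (∏ m, lam m x) • r x)
    (hf : ∀ a, ∀ q, MemRT (T.outNormal a) q → faceTanMoment T a (curl3 v) q = 0) (x : Vec) :
    r x = 0 := by
  set R : Vec := r (T.vtx 0) + r (T.vtx 1) + r (T.vtx 2) + r (T.vtx 3) with hR
  set S : ℝ := ∑ m, dot3 (r (T.vtx m)) (T.vtx m) with hS
  have hRc : ∀ {i j l a : Fin 4}, D4 i j l a → ∀ c, R c =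
      r (T.vtx i) c + r (T.vtx j) c + r (T.vtx l) c + r (T.vtx a) c := by
    intro i j l a hd c
    rw [← hd.sum (fun m => r (T.vtx m) c), Fin.sum_univ_four]; rfl
  have key : ∀ l m, l ≠ m → dot3 (r (T.vtx l)) (T.vtx l - T.vtx m) = S - dot3 R (T.vtx m) := by
    intro a i hai
    obtain ⟨j, l, hd⟩ := D4.ex2 hai
    have hd' : D4 i j l a := by unfold D4 at *; tauto
    have := faceT h hr hv hd' (hf a)
    rw [hS, hd'.sum]
    simp only [dot3_eq, hRc hd', Pi.sub_apply] at *
    linarith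
  have hR0 : R = 0 := by
    refine perp h 0 _ fun i => ?_
    rcases eq_or_ne i 0 with rfl | hi
    · simp [dot3]
    obtain ⟨l, a, hd⟩ := D4.ex2 hi
    have k1 := key i 0 hi
    have k2 := key 0 i hi.symm
    have k3 := key l 0 hd.2.2.2.1.symm
    have k4 := key l i hd.2.1.symm
    have k5 := key a 0 hd.2.2.2.2.1.symm
    have k6 := key a i hd.2.2.1.symm
    have e0 := hRc hd 0
    have e1 := hRc hd 1
    have e2 := hRc hd 2
    have : dot3 R (T.vtx i - T.vtx 0) = dot3 (r (T.vtx i)) (T.vtx i - T.vtx 0)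
      + dot3 (r (T.vtx 0)) (T.vtx i - T.vtx 0) + dot3 (r (T.vtx l)) (T.vtx i - T.vtx 0)
      + dot3 (r (T.vtx a)) (T.vtx i - T.vtx 0) := by
      simp only [dot3_eq, e0, e1, e2]; ring
    clear e0 e1 e2
    simp only [dot3_eq, Pi.sub_apply] at *
    linarith
  have hS0 : S = 0 := by
    have k1 := key 1 0 (by decide)
    have k2 := key 2 0 (by decide)
    have k3 := key 3 0 (by decide)
    have e := fun c => congrFun hR0 c
    have e0 := e 0
    have e1 := e 1
    have e2 := e 2
    rw [hR0] at k1 k2 k3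
    simp only [hR, Pi.add_apply, Pi.zero_apply] at e0 e1 e2
    have hs := hS
    rw [Fin.sum_univ_four] at hs
    clear_value S
    simp only [dot3_eq, Pi.sub_apply, Pi.zero_apply] at *
    linear_combination (-1 / 2 : ℝ) * (hs + k1 + k2 + k3) - (1/2 : ℝ) * (T.vtx 0 0 * e0 + T.vtx 0 1 * e1 + T.vtx 0 2 * e2)
  have hr0 : ∀ l, r (T.vtx l) = 0 := by
    intro l
    refine perp h l _ fun m => ?_
    rcases eq_or_ne l m with rfl | hm
    · simp [dot3]
    have := key l m hm
    rw [hS0, hR0] at this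
    simp only [dot3_eq, Pi.sub_apply, Pi.zero_apply] at *
    linarith
  obtain ⟨s1, s2⟩ := h.decomp x
  rw [Fin.sum_univ_four] at s1 s2
  ext c
  rw [s2, (hr c).affine _ _ _ _ _ _ _ _ s1]
  simp [hr0]

/-- Unisolvence of the DoFs (2.1)-(2.3) for `W_k(K)`, `k = 1,2`:
if `v ∈ W_k(K)` and all the edge moments against `P_k(e)`, tangential face moments
against `RM_{k-2}(F)`, and curl-trace face moments against `RT(F)` vanish, then `v = 0`. -/
theorem statement3 (k : ℕ) (hk : k = 1 ∨ k = 2) (T : Tetra) (v : Vec → Vec)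
    (hv : MemW k T v)
    (hedge : ∀ a b : Fin 4, a ≠ b → ∀ q, PolyDeg k q → edgeMoment T a b v q = 0)
    (hfaceRM : ∀ a : Fin 4, ∀ q, MemRM k (T.outNormal a) q → faceTanMoment T a v q = 0)
    (hfaceRT : ∀ a : Fin 4, ∀ q, MemRT (T.outNormal a) q →
      faceTanMoment T a (curl3 v) q = 0) :
    ∀ x ∈ T.K, v x = 0 := by
  obtain ⟨q, p, r, b, ⟨lam, hl, hb⟩, hq, hp, hr, hv⟩ := hv
  have hw : ∀ x, grad3 q x + cross3 x (p x) = 0 := by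
    refine stepA hk hl hq hp (fun _ => rfl) (v := v) (fun a x hx => ?_) hedge hfaceRM
    rw [hv, hb, Finset.prod_eq_zero (Finset.mem_univ a) hx]
    simp
  have hv2 : ∀ x, v x = (∏ m, lam m x) • r x := fun x => by rw [hv, hw, hb, zero_add]
  intro x _
  rw [hv2, stepB hl hr hv2 hfaceRT x, smul_zero]
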